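/- (Main theorem on I_α, first weight condition) Let 0<α<mn and q = n/(mn−α). Let u_1,…,u_m and v be weights on ℝ^n, write u⃗^{mq} = (u_1^{mq},…,u_m^{mq}) and ν = ∏_{i=1}^m u_i^q. Suppose u⃗^{mq} ∈ A_{(1,…,1)} and ν v^q ∈ A_∞. Then there exists a constant C such that for all f_1,…,f_m, ‖I_α(f⃗)/v‖_{L^{q,∞}(ν v^q)} ≤ C ∏_{i=1}^m ‖f_i‖_{L^1(u_i)}. -/

import Mathlib

open MeasureTheory ENNReal Set

noncomputable section

/-- Euclidean space `ℝ^n`. -/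
abbrev ESp (n : ℕ) := EuclideanSpace ℝ (Fin n)

/-- An axis-parallel cube with positive finite side length. -/
def IsCube {n : ℕ} (Q : Set (ESp n)) : Prop :=
  ∃ (c : Fin n → ℝ) (h : ℝ), 0 < h ∧ Q = {x : ESp n | ∀ i, c i ≤ x i ∧ x i ≤ c i + h}

/-- The measure `w(E) = ∫_E w` associated to a weight `w`. -/
def wMeas {n : ℕ} (w : ESp n → ℝ) (E : Set (ESp n)) : ℝ≥0∞ :=
  ∫⁻ x in E, ENNReal.ofReal (w x)

/-- A weight: a nonnegative locally integrable function, positive (and finite) a.e. -/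
def IsWeight {n : ℕ} (w : ESp n → ℝ) : Prop :=
  Measurable w ∧ (∀ x, 0 ≤ w x) ∧ (∀ᵐ x ∂(volume : Measure (ESp n)), 0 < w x) ∧
    ∀ Q : Set (ESp n), IsCube Q → wMeas w Q < ⊤

/-- `C` is an admissible `A₁` constant for `w`. -/
def A1Const {n : ℕ} (w : ESp n → ℝ) (C : ℝ≥0∞) : Prop :=
  ∀ Q : Set (ESp n), IsCube Q →
    (volume Q)⁻¹ * wMeas w Q ≤ C * essInf (fun x => ENNReal.ofReal (w x)) (volume.restrict Q)

/-- The Muckenhoupt class `A₁`. -/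
def IsA1 {n : ℕ} (w : ESp n → ℝ) : Prop := ∃ C : ℝ≥0∞, C < ⊤ ∧ A1Const w C

/-- The Muckenhoupt class `A_p`, `1 < p < ∞`. -/
def IsAp {n : ℕ} (w : ESp n → ℝ) (p : ℝ) : Prop :=
  ∃ C : ℝ≥0∞, C < ⊤ ∧ ∀ Q : Set (ESp n), IsCube Q →
    ((volume Q)⁻¹ * wMeas w Q) *
      ((volume Q)⁻¹ * ∫⁻ x in Q, ENNReal.ofReal (w x) ^ (1 - p / (p - 1))) ^ (p - 1) ≤ C

/-- The class `A_∞ = ⋃_{p ≥ 1} A_p`. -/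
def IsAinfty {n : ℕ} (w : ESp n → ℝ) : Prop :=
  IsA1 w ∨ ∃ p : ℝ, 1 < p ∧ IsAp w p

/-- The Hardy–Littlewood maximal function (over cubes). -/
def maxFn {n : ℕ} (f : ESp n → ℝ) (x : ESp n) : ℝ≥0∞ :=
  ⨆ (Q : Set (ESp n)) (_ : IsCube Q) (_ : x ∈ Q),
    (volume Q)⁻¹ * ∫⁻ y in Q, ENNReal.ofReal |f y|

/-- The Fujii–Wilson `A_∞` constant. -/
def FW {n : ℕ} (w : ESp n → ℝ) : ℝ≥0∞ :=
  ⨆ (Q : Set (ESp n)) (_ : IsCube Q),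
    (wMeas w Q)⁻¹ * ∫⁻ x in Q, maxFn (Q.indicator w) x

/-- The weighted weak `L^{q,∞}(w)` quasinorm of `g`. -/
def wnorm {n : ℕ} (g : ESp n → ℝ≥0∞) (q : ℝ) (w : ESp n → ℝ) : ℝ≥0∞ :=
  ⨆ (t : ℝ) (_ : 0 < t), ENNReal.ofReal t * (wMeas w {x | ENNReal.ofReal t < g x}) ^ (1 / q)

/-- The weighted `L¹(w)` norm. -/
def L1norm {n : ℕ} (f : ESp n → ℝ) (w : ESp n → ℝ) : ℝ≥0∞ :=
  ∫⁻ x, ENNReal.ofReal (|f x| * w x)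

/-- The fractional maximal operator `M_α`. -/
def fracM {n : ℕ} (α : ℝ) (f : ESp n → ℝ) (x : ESp n) : ℝ≥0∞ :=
  ⨆ (Q : Set (ESp n)) (_ : IsCube Q) (_ : x ∈ Q),
    ((volume Q) ^ (1 - α / (n : ℝ)))⁻¹ * ∫⁻ y in Q, ENNReal.ofReal |f y|

/-- The fractional integral (Riesz potential) `I_α`. -/
def fracI {n : ℕ} (α : ℝ) (f : ESp n → ℝ) (x : ESp n) : ℝ :=
  ∫ y, f y / dist x y ^ ((n : ℝ) - α)

/-- The multi(sub)linear maximal function `𝓜`. -/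
def multiM {n m : ℕ} (f : Fin m → ESp n → ℝ) (x : ESp n) : ℝ≥0∞ :=
  ⨆ (Q : Set (ESp n)) (_ : IsCube Q) (_ : x ∈ Q),
    ∏ i, (volume Q)⁻¹ * ∫⁻ y in Q, ENNReal.ofReal |f i y|

/-- The multi(sub)linear fractional maximal operator `𝓜_α`. -/
def multiMα {n m : ℕ} (α : ℝ) (f : Fin m → ESp n → ℝ) (x : ESp n) : ℝ≥0∞ :=
  ⨆ (Q : Set (ESp n)) (_ : IsCube Q) (_ : x ∈ Q),
    ∏ i, ((volume Q) ^ (1 - α / ((m : ℝ) * (n : ℝ))))⁻¹ * ∫⁻ y in Q, ENNReal.ofReal |f i y|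

/-- The multilinear fractional integral `𝓘_α`. -/
def multiIα {n m : ℕ} (α : ℝ) (f : Fin m → ESp n → ℝ) (x : ESp n) : ℝ :=
  ∫ y : Fin m → ESp n, (∏ i, f i (y i)) / (∑ i, dist x (y i)) ^ ((m : ℝ) * (n : ℝ) - α)

/-- The multilinear class `A_{(1,…,1)}`. -/
def A11 {n m : ℕ} (w : Fin m → ESp n → ℝ) : Prop :=
  ∃ C : ℝ≥0∞, C < ⊤ ∧ ∀ Q : Set (ESp n), IsCube Q →
    ((volume Q)⁻¹ * ∫⁻ x in Q, ENNReal.ofReal (∏ i, w i x ^ ((m : ℝ)⁻¹))) ^ (m : ℝ) *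
      ∏ i, (essInf (fun x => ENNReal.ofReal (w i x)) (volume.restrict Q))⁻¹ ≤ C


section Helpers

open Filter Topology Metric



/-- Pointwise `A₁` condition over sup-norm balls, for the measure with density `g`. -/
def A1b {n : ℕ} (g : (Fin n → ℝ) → ℝ≥0∞) (C : ℝ) : Prop :=
  ∀ (x : Fin n → ℝ) (r : ℝ), 0 < r → ∀ᵐ z, z ∈ closedBall x r →
    (volume.withDensity g) (closedBall x r) ≤ ENNReal.ofReal C * volume (closedBall x r) * g z

lemma vol_cb {n : ℕ} (x : Fin n → ℝ) {r : ℝ} (hr : 0 ≤ r) :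
    volume.real (closedBall x r) = (2 * r) ^ n := by
  rw [Measure.real, Real.volume_pi_closedBall _ hr, ENNReal.toReal_ofReal (by positivity)]
  simp

lemma A1b_cmp {n : ℕ} {g : (Fin n → ℝ) → ℝ≥0∞} {C : ℝ} (hg : Measurable g) (h : A1b g C)
    {x : Fin n → ℝ} {r : ℝ} (hr : 0 < r) {F : Set (Fin n → ℝ)} (hF : MeasurableSet F)
    (hFs : F ⊆ closedBall x r) :
    (volume.withDensity g) (closedBall x r) * volume F ≤
      ENNReal.ofReal C * volume (closedBall x r) * (volume.withDensity g) F := by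
  rw [withDensity_apply _ hF, ← lintegral_const_mul _ hg]
  calc (volume.withDensity g) (closedBall x r) * volume F
      = ∫⁻ z in F, (volume.withDensity g) (closedBall x r) := by simp
    _ ≤ _ := by
      apply lintegral_mono_ae
      rw [ae_restrict_iff' hF]
      filter_upwards [h x r hr] with z hz hzF
      exact hz (hFs hzF)

lemma A1b_cmp_real {n : ℕ} {g : (Fin n → ℝ) → ℝ≥0∞} {C : ℝ} (hC : 0 ≤ C)
    (hg : Measurable g) (h : A1b g C)
    (hfin : ∀ x r, (volume.withDensity g) (closedBall x r) < ⊤)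
    {x : Fin n → ℝ} {r : ℝ} (hr : 0 < r) {F : Set (Fin n → ℝ)} (hF : MeasurableSet F)
    (hFs : F ⊆ closedBall x r) :
    (volume.withDensity g).real (closedBall x r) * volume.real F ≤
      C * (2 * r) ^ n * (volume.withDensity g).real F := by
  have h1 := A1b_cmp hg h hr hF hFs
  have h2 := ENNReal.toReal_mono (by
    refine ENNReal.mul_ne_top (ENNReal.mul_ne_top ENNReal.ofReal_ne_top measure_closedBall_lt_top.ne) ?_
    exact ((measure_mono hFs).trans_lt (hfin x r)).ne) h1
  simp only [ENNReal.toReal_mul, ENNReal.toReal_ofReal hC] at h2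
  rw [← vol_cb x hr.le]
  exact h2

lemma exists_half_ball {n : ℕ} {c x : Fin n → ℝ} {H r : ℝ} (hx : x ∈ closedBall c H)
    (hH : 0 < H) (hr : 0 < r) (hrH : r ≤ 2 * H) :
    ∃ z, closedBall z (r / 2) ⊆ closedBall x r ∩ closedBall c H := by
  refine ⟨x + (r / (2 * H)) • (c - x), ?_⟩
  rw [mem_closedBall, dist_eq_norm] at hx
  have h0 : 0 ≤ r / (2 * H) := by positivity
  have h1 : r / (2 * H) ≤ 1 := by rw [div_le_one (by positivity)]; exact hrH
  have h3 : r / (2 * H) * H = r / 2 := by field_simp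
  apply subset_inter
  · apply closedBall_subset_closedBall'
    rw [dist_eq_norm, add_sub_cancel_left, norm_smul, Real.norm_of_nonneg h0, norm_sub_rev]
    nlinarith
  · apply closedBall_subset_closedBall'
    rw [dist_eq_norm]
    have : x + (r / (2 * H)) • (c - x) - c = (1 - r / (2 * H)) • (x - c) := by
      module
    rw [this, norm_smul, Real.norm_of_nonneg (by linarith)]
    nlinarith

lemma level_est {n : ℕ} {g : (Fin n → ℝ) → ℝ≥0∞} {C : ℝ} (hC : 1 ≤ C)
    (hg : Measurable g) (h : A1b g C)
    (hfin : ∀ x r, (volume.withDensity g) (closedBall x r) < ⊤)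
    (c : Fin n → ℝ) {H : ℝ} (hH : 0 < H) {lam : ℝ} (hlam : 0 < lam)
    (havg : (volume.withDensity g).real (closedBall c H) ≤ lam * (2 * H) ^ n) :
    (volume.withDensity g) (closedBall c H ∩ {x | ENNReal.ofReal lam < g x}) ≤
      ENNReal.ofReal (C ^ 2 * 10 ^ n * lam) *
        volume (closedBall c H ∩ {x | ENNReal.ofReal (lam / C) ≤ g x}) := by
  set ν := (volume.withDensity g) with hν
  have hC0 : 0 < C := by linarith
  have : IsLocallyFiniteMeasure ν := ⟨fun x => ⟨closedBall x 1, closedBall_mem_nhds x one_pos, hfin x 1⟩⟩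
  set G := closedBall c H ∩ {x | ENNReal.ofReal (lam / C) ≤ g x} with hG
  have hGm : MeasurableSet G :=
    measurableSet_closedBall.inter (measurableSet_le measurable_const hg)
  -- the average condition at radius r around x
  let P : (Fin n → ℝ) → ℝ → Prop := fun x r => lam * (2 * r) ^ n < ν.real (closedBall x r)
  have hselect : ∀ᵐ x, x ∈ closedBall c H ∩ {x | ENNReal.ofReal lam < g x} →
      ∃ r, 0 < r ∧ r ≤ 2 * H ∧ P x r ∧ ν.real (closedBall x (2 * r)) ≤ C * lam * (2 * (2 * r)) ^ n := by
    filter_upwards [Besicovitch.ae_tendsto_rnDeriv ν volume,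
      Measure.rnDeriv_withDensity volume hg] with x hx hx2 hxS
    rw [← hν] at hx2
    rw [hx2] at hx
    have hseq : Tendsto (fun k : ℕ => 2 * H * (1 / 2 : ℝ) ^ k) atTop (𝓝[>] 0) := by
      rw [tendsto_nhdsWithin_iff]
      constructor
      · have := (tendsto_pow_atTop_nhds_zero_of_lt_one (r := (1/2 : ℝ)) (by norm_num) (by norm_num)).const_mul (2 * H)
        simpa using this
      · exact Eventually.of_forall fun k => by simp only [mem_Ioi]; positivity
    have hev := (hx.comp hseq).eventually (lt_mem_nhds hxS.2)
    have hex : ∃ k : ℕ, P x (2 * H * (1 / 2 : ℝ) ^ k) := by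
      obtain ⟨k, hk⟩ := hev.exists
      refine ⟨k, ?_⟩
      have hrk : 0 < 2 * H * (1 / 2 : ℝ) ^ k := by positivity
      simp only [Function.comp] at hk
      have hvol : volume (closedBall x (2 * H * (1 / 2 : ℝ) ^ k)) = ENNReal.ofReal ((2 * (2 * H * (1 / 2 : ℝ) ^ k)) ^ n) := by
        rw [Real.volume_pi_closedBall _ hrk.le]; simp
      rw [ENNReal.lt_div_iff_mul_lt (Or.inl (by rw [hvol]; simp; positivity)) (Or.inl (by rw [hvol]; simp)), hvol,
        ← ENNReal.ofReal_mul hlam.le] at hk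
      exact (ENNReal.ofReal_lt_iff_lt_toReal (by positivity) (hfin _ _).ne).1 hk
    classical
    let k := Nat.find hex
    have hk : P x (2 * H * (1 / 2 : ℝ) ^ k) := Nat.find_spec hex
    refine ⟨2 * H * (1 / 2 : ℝ) ^ k, by positivity, ?_, hk, ?_⟩
    · have : (1 / 2 : ℝ) ^ k ≤ 1 := pow_le_one₀ (by norm_num) (by norm_num)
      nlinarith
    · rcases Nat.eq_zero_or_pos k with h0 | h0
      · have hsub : closedBall c H ⊆ closedBall x (2 * (2 * H)) := by
          apply closedBall_subset_closedBall'
          have := hxS.1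
          rw [mem_closedBall, dist_comm] at this
          linarith
        have := A1b_cmp_real hC0.le hg h hfin (r := 2 * (2 * H)) (by positivity) measurableSet_closedBall hsub
        rw [vol_cb _ hH.le, ← hν] at this
        rw [h0, pow_zero, mul_one]
        have hp : 0 < (2 * H) ^ n := by positivity
        have hp2 : 0 < C * (2 * (2 * (2 * H))) ^ n := by positivity
        have := this.trans (mul_le_mul_of_nonneg_left havg hp2.le)
        have h4 : ν.real (closedBall x (2 * (2 * H))) * (2 * H) ^ n ≤ (C * lam * (2 * (2 * (2 * H))) ^ n) * (2 * H) ^ n := by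
          linarith
        exact le_of_mul_le_mul_right h4 hp
      · have hnot : ¬ P x (2 * H * (1 / 2 : ℝ) ^ (k - 1)) := Nat.find_min hex (by omega)
        have heq : 2 * H * (1 / 2 : ℝ) ^ (k - 1) = 2 * (2 * H * (1 / 2 : ℝ) ^ k) := by
          obtain ⟨j, hj⟩ : ∃ j, k = j + 1 := ⟨k - 1, by omega⟩
          rw [hj, pow_succ]; simp only [Nat.add_sub_cancel]; ring
        rw [heq] at hnot
        simp only [P, not_lt] at hnot
        refine hnot.trans ?_
        apply mul_le_mul_of_nonneg_right _ (by positivity)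
        nlinarith
  let t : Set (Fin n → ℝ) := {x | x ∈ closedBall c H ∧ ∃ r, 0 < r ∧ r ≤ 2 * H ∧ P x r ∧ ν.real (closedBall x (2 * r)) ≤ C * lam * (2 * (2 * r)) ^ n}
  have hr : ∀ x, ∃ r : ℝ, x ∈ t → 0 < r ∧ r ≤ 2 * H ∧ P x r ∧ ν.real (closedBall x (2 * r)) ≤ C * lam * (2 * (2 * r)) ^ n := by
    intro x
    by_cases hx : x ∈ t
    · obtain ⟨r, hr⟩ := hx.2
      exact ⟨r, fun _ => hr⟩
    · exact ⟨0, fun h => absurd h hx⟩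
  choose r hr using hr
  obtain ⟨U, hUt, hUd, hUc⟩ := Vitali.exists_disjoint_subfamily_covering_enlargement_closedBall t id r (2 * H)
    (fun a ha => (hr a ha).2.1) 5 (by norm_num)
  have hUcount : U.Countable := by
    apply hUd.countable_of_nonempty_interior
    intro x hx
    refine ⟨x, ?_⟩
    rw [mem_interior_iff_mem_nhds]
    exact closedBall_mem_nhds _ (hr x (hUt hx)).1
  have hball : ∀ x ∈ U, ν (closedBall x (5 * r x)) ≤ ENNReal.ofReal (C ^ 2 * 10 ^ n * lam) * volume (closedBall x (r x) ∩ G) := by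
    intro x hx
    obtain ⟨hr0, hrH, hP, h2⟩ := hr x (hUt hx)
    set ρ := r x with hρ
    have e1 : ν.real (closedBall x (5 * ρ)) ≤ C ^ 2 * lam * (2 * (5 * ρ)) ^ n := by
      have := A1b_cmp_real hC0.le hg h hfin (x := x) (r := 5 * ρ) (by positivity) measurableSet_closedBall
        (closedBall_subset_closedBall (by linarith) : closedBall x (2 * ρ) ⊆ closedBall x (5 * ρ))
      rw [vol_cb _ (by positivity), ← hν] at this
      have hp : 0 < (2 * (2 * ρ)) ^ n := by positivity
      have hp2 : 0 < C * (2 * (5 * ρ)) ^ n := by positivity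
      have := this.trans (mul_le_mul_of_nonneg_left h2 hp2.le)
      refine le_of_mul_le_mul_right (a := (2 * (2 * ρ)) ^ n) ?_ hp
      linarith
    obtain ⟨z, hz⟩ := exists_half_ball (hUt hx).1 hH hr0 hrH
    have e2 : volume (closedBall z (ρ / 2)) ≤ volume (closedBall x ρ ∩ G) := by
      apply measure_mono_ae
      filter_upwards [h x ρ hr0] with y hy hyz
      have hyz' := hz hyz
      refine ⟨hyz'.1, hyz'.2, ?_⟩
      have h5 := hy hyz'.1
      by_contra hcon
      have hcon : g y < ENNReal.ofReal (lam / C) := not_le.1 hcon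
      have h6 : ENNReal.ofReal (lam * (2 * ρ) ^ n) < ν (closedBall x ρ) :=
        (ENNReal.ofReal_lt_iff_lt_toReal (by positivity) (hfin _ _).ne).2 hP
      have h7 : ENNReal.ofReal C * volume (closedBall x ρ) * g y ≤ ENNReal.ofReal (lam * (2 * ρ) ^ n) := by
        rw [Real.volume_pi_closedBall _ hr0.le, ← ENNReal.ofReal_mul hC0.le]
        refine (mul_le_mul_right hcon.le _).trans ?_
        rw [← ENNReal.ofReal_mul (by positivity)]
        apply le_of_eq
        congr 1
        simp; field_simp
      exact absurd (h5.trans h7) (not_le.2 h6)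
    refine le_trans ?_ (mul_le_mul_right e2 _)
    rw [Real.volume_pi_closedBall _ (by positivity), ← ENNReal.ofReal_mul (by positivity)]
    rw [ENNReal.le_ofReal_iff_toReal_le (hfin _ _).ne (by positivity)]
    refine e1.trans (le_of_eq ?_)
    simp only [Fintype.card_fin, mul_pow, div_pow]
    have : (10 : ℝ) ^ n = 2 ^ n * 5 ^ n := by rw [← mul_pow]; norm_num
    rw [this]; field_simp
  calc ν (closedBall c H ∩ {x | ENNReal.ofReal lam < g x})
      ≤ ν (⋃ x ∈ U, closedBall x (5 * r x)) := by
        have hν0 : ν ≪ volume := withDensity_absolutelyContinuous _ _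
        apply measure_mono_ae
        apply hν0.ae_le
        filter_upwards [hselect] with x hx hxS
        have hxt : x ∈ t := ⟨hxS.1, hx hxS⟩
        obtain ⟨b, hb, hsub⟩ := hUc x hxt
        exact mem_biUnion hb (hsub (mem_closedBall_self (hr x hxt).1.le))
    _ ≤ ∑' x : U, ν (closedBall x.1 (5 * r x.1)) := measure_biUnion_le _ hUcount _
    _ ≤ ∑' x : U, ENNReal.ofReal (C ^ 2 * 10 ^ n * lam) * volume (closedBall x.1 (r x.1) ∩ G) :=
        ENNReal.tsum_le_tsum fun x => hball x.1 x.2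
    _ = ENNReal.ofReal (C ^ 2 * 10 ^ n * lam) * volume (⋃ x ∈ U, (closedBall x (r x) ∩ G)) := by
        rw [ENNReal.tsum_mul_left, measure_biUnion hUcount]
        · intro a ha b hb hab
          exact (hUd ha hb hab).mono inter_subset_left inter_subset_left
        · intro x _
          exact measurableSet_closedBall.inter hGm
    _ ≤ _ := by
        gcongr
        exact iUnion₂_subset fun x _ => inter_subset_right


lemma const_mul_vol_le {n : ℕ} {g : (Fin n → ℝ) → ℝ≥0∞}
    (hfin : ∀ x r, (volume.withDensity g) (closedBall x r) < ⊤)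
    {c : Fin n → ℝ} {H : ℝ} {a : ℝ} (ha : 0 ≤ a) {F : Set (Fin n → ℝ)} (hF : MeasurableSet F)
    (hFs : F ⊆ closedBall c H) (hFa : ∀ x ∈ F, ENNReal.ofReal a ≤ g x) :
    a * volume.real F ≤ (volume.withDensity g).real F := by
  have h1 : ENNReal.ofReal a * volume F ≤ (volume.withDensity g) F := by
    rw [withDensity_apply _ hF, ← setLIntegral_const]
    exact setLIntegral_mono' hF hFa
  have h2 := ENNReal.toReal_mono ((measure_mono hFs).trans_lt (hfin c H)).ne h1
  rwa [ENNReal.toReal_mul, ENNReal.toReal_ofReal ha] at h2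

lemma level_step {n : ℕ} {g : (Fin n → ℝ) → ℝ≥0∞} {C K : ℝ} (hC : 1 ≤ C)
    (hK : K = C ^ 2 * 10 ^ n)
    (hg : Measurable g) (h : A1b g C)
    (hfin : ∀ x r, (volume.withDensity g) (closedBall x r) < ⊤)
    (c : Fin n → ℝ) {H : ℝ} (hH : 0 < H) {lam : ℝ} (hlam : 0 < lam)
    (havg : (volume.withDensity g).real (closedBall c H) ≤ lam * (2 * H) ^ n) :
    (volume.withDensity g).real (closedBall c H ∩ {x | ENNReal.ofReal (4 * C * K * lam) < g x}) ≤
      (2 * C * K / (1 / 2 + 2 * C * K)) *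
      (volume.withDensity g).real (closedBall c H ∩ {x | ENNReal.ofReal lam < g x}) := by
  set ν := (volume.withDensity g) with hν
  have hC0 : 0 < C := by linarith
  have hK0 : 0 < K := by rw [hK]; positivity
  have hK1 : 1 ≤ K := by
    rw [hK]; exact one_le_mul_of_one_le_of_one_le (one_le_pow₀ hC) (one_le_pow₀ (by norm_num))
  have hm : ∀ a : ℝ, MeasurableSet (closedBall c H ∩ {x | ENNReal.ofReal a < g x}) := fun a =>
    measurableSet_closedBall.inter (measurableSet_lt measurable_const hg)
  have hnf : ∀ {F : Set (Fin n → ℝ)}, F ⊆ closedBall c H → ν F ≠ ⊤ := fun hF =>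
    ((measure_mono hF).trans_lt (hfin c H)).ne
  have hvf : ∀ {F : Set (Fin n → ℝ)}, F ⊆ closedBall c H → volume F ≠ ⊤ := fun hF =>
    ((measure_mono hF).trans_lt measure_closedBall_lt_top).ne
  have h1 := level_est hC hg h hfin c hH (lam := 2 * C * lam) (by positivity) (by
    refine havg.trans ?_
    apply mul_le_mul_of_nonneg_right _ (by positivity)
    nlinarith)
  rw [← hν, ← hK] at h1
  have e1 : ν.real (closedBall c H ∩ {x | ENNReal.ofReal (2 * C * lam) < g x}) ≤
      K * (2 * C * lam) * volume.real (closedBall c H ∩ {x | ENNReal.ofReal (2 * C * lam / C) ≤ g x}) := by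
    have := ENNReal.toReal_mono (ENNReal.mul_ne_top ENNReal.ofReal_ne_top (hvf inter_subset_left)) h1
    rwa [ENNReal.toReal_mul, ENNReal.toReal_ofReal (by positivity)] at this
  set A := closedBall c H ∩ {x | ENNReal.ofReal lam < g x} with hA
  set B := closedBall c H ∩ {x | ENNReal.ofReal (4 * C * K * lam) < g x} with hB
  have hBA : B ⊆ A := by
    intro x hx
    refine ⟨hx.1, lt_of_le_of_lt (ENNReal.ofReal_le_ofReal ?_) hx.2⟩
    have : 1 ≤ 4 * C * K := by nlinarith
    nlinarith
  have e2 : volume.real (closedBall c H ∩ {x | ENNReal.ofReal (2 * C * lam / C) ≤ g x}) ≤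
      volume.real (A \ B) + volume.real B := by
    refine le_trans (measureReal_mono ?_ ?_) (measureReal_union_le _ _)
    · intro x hx
      rw [sdiff_union_of_subset hBA]
      have hlt : ENNReal.ofReal lam < ENNReal.ofReal (2 * C * lam / C) := by
        rw [ENNReal.ofReal_lt_ofReal_iff (by positivity)]
        field_simp
        linarith
      exact ⟨hx.1, lt_of_lt_of_le hlt hx.2⟩
    · exact hvf (by rw [sdiff_union_of_subset hBA]; exact inter_subset_left)
  have e3 : lam * volume.real (A \ B) ≤ ν.real A - ν.real B := by
    have := const_mul_vol_le hfin hlam.le ((hm _).diff (hm _) : MeasurableSet (A \ B))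
      (sdiff_subset.trans inter_subset_left) (fun x hx => hx.1.2.le)
    rwa [← hν, measureReal_sdiff hBA (hm _) (hnf inter_subset_left)] at this
  have e4 : (4 * C * K * lam) * volume.real B ≤ ν.real B :=
    const_mul_vol_le hfin (by positivity) (hm _) inter_subset_left (fun x hx => hx.2.le)
  have e5 : ν.real B ≤ ν.real (closedBall c H ∩ {x | ENNReal.ofReal (2 * C * lam) < g x}) := by
    apply measureReal_mono _ (hnf inter_subset_left)
    intro x hx
    refine ⟨hx.1, lt_of_le_of_lt (ENNReal.ofReal_le_ofReal ?_) hx.2⟩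
    have : 2 * C * lam * 1 ≤ 2 * C * lam * (2 * K) := by
      apply mul_le_mul_of_nonneg_left _ (by positivity); linarith
    linarith
  rw [div_mul_eq_mul_div, le_div_iff₀ (by positivity)]
  have e6 := e5.trans (e1.trans (mul_le_mul_of_nonneg_left e2 (by positivity)))
  have e7 : 2 * C * K * (lam * volume.real (A \ B)) ≤ 2 * C * K * (ν.real A - ν.real B) :=
    mul_le_mul_of_nonneg_left e3 (by positivity)
  nlinarith

lemma decay {n : ℕ} {g : (Fin n → ℝ) → ℝ≥0∞} {C : ℝ} (hC : 1 ≤ C)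
    (hg : Measurable g) (h : A1b g C)
    (hfin : ∀ x r, (volume.withDensity g) (closedBall x r) < ⊤) :
    ∃ θ N : ℝ, 0 < θ ∧ θ < 1 ∧ 1 ≤ N ∧ ∀ (c : Fin n → ℝ) (H : ℝ), 0 < H →
      ∀ E : Set (Fin n → ℝ), MeasurableSet E → E ⊆ closedBall c H → ∀ i : ℕ,
      (volume.withDensity g).real E ≤ θ ^ i * (volume.withDensity g).real (closedBall c H) +
        N ^ i * (volume.withDensity g).real (closedBall c H) * (volume.real E / (2 * H) ^ n) := by
  have hC0 : 0 < C := by linarith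
  obtain ⟨K, hK⟩ : ∃ K, K = C ^ 2 * 10 ^ n := ⟨_, rfl⟩
  have hK0 : 0 < K := by rw [hK]; positivity
  have hK1 : 1 ≤ K := by
    rw [hK]; exact one_le_mul_of_one_le_of_one_le (one_le_pow₀ hC) (one_le_pow₀ (by norm_num))
  have hN1 : 1 ≤ 4 * C * K := by nlinarith
  refine ⟨2 * C * K / (1 / 2 + 2 * C * K), 4 * C * K, by positivity, ?_, hN1, ?_⟩
  · rw [div_lt_one (by positivity)]; linarith
  intro c H hH E hE hEs i
  set θ := 2 * C * K / (1 / 2 + 2 * C * K) with hθ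
  have hθ0 : 0 < θ := by positivity
  set N := 4 * C * K with hN
  set ν := (volume.withDensity g) with hν
  have hnf : ∀ {F : Set (Fin n → ℝ)}, F ⊆ closedBall c H → ν F ≠ ⊤ := fun hF =>
    ((measure_mono hF).trans_lt (hfin c H)).ne
  rcases (measureReal_nonneg (μ := ν) (s := closedBall c H)).eq_or_lt with h0 | h0
  · rw [← h0]
    have : ν.real E ≤ ν.real (closedBall c H) := measureReal_mono hEs (hnf subset_rfl)
    simpa [← h0] using this
  set lam := ν.real (closedBall c H) / (2 * H) ^ n with hlam
  have hlam0 : 0 < lam := by positivity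
  have hL : ∀ i : ℕ, ν.real (closedBall c H ∩ {x | ENNReal.ofReal (N ^ i * lam) < g x}) ≤
      θ ^ i * ν.real (closedBall c H) := by
    intro i
    induction i with
    | zero => simpa using measureReal_mono inter_subset_left (hnf subset_rfl)
    | succ i ih =>
      have := level_step hC hK hg h hfin c hH (lam := N ^ i * lam) (by positivity) (by
        have h1 : 1 ≤ N ^ i := one_le_pow₀ hN1
        have h2 : lam * (2 * H) ^ n = ν.real (closedBall c H) := by
          rw [hlam]; field_simp
        rw [mul_assoc, h2]
        exact le_mul_of_one_le_left h0.le h1)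
      rw [← hθ, ← hN, ← hν, ← mul_assoc, ← pow_succ'] at this
      refine this.trans ?_
      rw [pow_succ', mul_assoc]
      exact mul_le_mul_of_nonneg_left ih hθ0.le
  have hsplit : ν.real E ≤ ν.real (closedBall c H ∩ {x | ENNReal.ofReal (N ^ i * lam) < g x}) +
      ν.real (E ∩ {x | g x ≤ ENNReal.ofReal (N ^ i * lam)}) := by
    refine le_trans (measureReal_mono ?_ ?_) (measureReal_union_le _ _)
    · intro x hx
      by_cases hx2 : g x ≤ ENNReal.ofReal (N ^ i * lam)
      · exact Or.inr ⟨hx, hx2⟩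
      · exact Or.inl ⟨hEs hx, not_le.1 hx2⟩
    · exact hnf (union_subset inter_subset_left (inter_subset_left.trans hEs))
  have hlast : ν.real (E ∩ {x | g x ≤ ENNReal.ofReal (N ^ i * lam)}) ≤ N ^ i * lam * volume.real E := by
    have hm : MeasurableSet (E ∩ {x | g x ≤ ENNReal.ofReal (N ^ i * lam)}) :=
      hE.inter (measurableSet_le hg measurable_const)
    have h1 : ν (E ∩ {x | g x ≤ ENNReal.ofReal (N ^ i * lam)}) ≤ ENNReal.ofReal (N ^ i * lam) * volume E := by
      rw [hν, withDensity_apply _ hm]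
      calc _ ≤ ∫⁻ x in E ∩ {x | g x ≤ ENNReal.ofReal (N ^ i * lam)}, ENNReal.ofReal (N ^ i * lam) :=
            setLIntegral_mono' hm fun x hx => hx.2
        _ ≤ _ := by
          rw [setLIntegral_const]
          gcongr
          exact inter_subset_left
    have hvE : volume E ≠ ⊤ := ((measure_mono hEs).trans_lt measure_closedBall_lt_top).ne
    have h2 := ENNReal.toReal_mono (ENNReal.mul_ne_top ENNReal.ofReal_ne_top hvE) h1
    rwa [ENNReal.toReal_mul, ENNReal.toReal_ofReal (by positivity)] at h2
  have heq : N ^ i * ν.real (closedBall c H) * (volume.real E / (2 * H) ^ n) = N ^ i * lam * volume.real E := by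
    rw [hlam]; ring
  rw [heq]
  linarith [hL i]


/-- `A_∞`-type condition over sup-norm balls for the measure with density `f`. -/
def Ainfb {n : ℕ} (f : (Fin n → ℝ) → ℝ≥0∞) (P : ℕ) (C : ℝ) : Prop :=
  ∀ (x : Fin n → ℝ) (r : ℝ), 0 < r → ∀ F : Set (Fin n → ℝ), MeasurableSet F →
    F ⊆ closedBall x r →
    (volume.real F / (2 * r) ^ n) ^ P * (volume.withDensity f).real (closedBall x r) ≤
      C * (volume.withDensity f).real F

lemma rev_doubling {n : ℕ} (hn : 0 < n) {f : (Fin n → ℝ) → ℝ≥0∞} {P : ℕ} {C : ℝ} (hC : 1 ≤ C)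
    (h : Ainfb f P C)
    (hfin : ∀ x r, (volume.withDensity f) (closedBall x r) < ⊤) (y : Fin n → ℝ) {r : ℝ}
    (hr : 0 < r) :
    (volume.withDensity f).real (closedBall y r) ≤
      (1 - (2 / 3) ^ P / C) * (volume.withDensity f).real (closedBall y (3 * r)) := by
  set w := volume.withDensity f
  have hC0 : 0 < C := by linarith
  have hsub : closedBall y r ⊆ closedBall y (3 * r) := closedBall_subset_closedBall (by linarith)
  have h1 := h y (3 * r) (by positivity) (closedBall y (3 * r) \ closedBall y r)
    (measurableSet_closedBall.diff measurableSet_closedBall) sdiff_subset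
  rw [measureReal_sdiff hsub measurableSet_closedBall (hfin _ _).ne,
    measureReal_sdiff hsub measurableSet_closedBall measure_closedBall_lt_top.ne,
    vol_cb _ hr.le, vol_cb _ (by positivity)] at h1
  have h2 : (2 / 3 : ℝ) ≤ ((2 * (3 * r)) ^ n - (2 * r) ^ n) / (2 * (3 * r)) ^ n := by
    have e : ((2 * (3 * r)) ^ n - (2 * r) ^ n) / (2 * (3 * r)) ^ n = 1 - (1 / 3) ^ n := by
      rw [sub_div, div_self (by positivity), ← div_pow]
      congr 2; field_simp
    rw [e]
    have : (1 / 3 : ℝ) ^ n ≤ 1 / 3 := pow_le_of_le_one (by norm_num) (by norm_num) hn.ne'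
    linarith
  have h3 : (2 / 3 : ℝ) ^ P * w.real (closedBall y (3 * r)) ≤
      C * (w.real (closedBall y (3 * r)) - w.real (closedBall y r)) := by
    refine le_trans ?_ h1
    gcongr
  have h4 : (2 / 3 : ℝ) ^ P / C * w.real (closedBall y (3 * r)) ≤
      (w.real (closedBall y (3 * r)) - w.real (closedBall y r)) := by
    rw [div_mul_eq_mul_div, div_le_iff₀ hC0]; linarith
  linarith

lemma kernel_est {n : ℕ} (hn : 0 < n) {g h f : (Fin n → ℝ) → ℝ≥0∞} {C Cw : ℝ} {P : ℕ}
    (hP : P ≠ 0) (hC : 1 ≤ C) (hCw : 1 ≤ Cw)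
    (hg : Measurable g) (hh : Measurable h) (hf : Measurable f)
    (hfgh : f =ᵐ[volume] fun x => g x * h x)
    (hA1 : A1b g C) (hAi : Ainfb f P Cw)
    (hνfin : ∀ x r, (volume.withDensity g) (closedBall x r) < ⊤)
    (hwfin : ∀ x r, (volume.withDensity f) (closedBall x r) < ⊤)
    (hνpos : ∀ x r, 0 < r → 0 < (volume.withDensity g) (closedBall x r)) :
    ∃ D : ℝ, 0 ≤ D ∧ ∀ (y : Fin n → ℝ) (s : ℝ), 0 < s →
      (volume.withDensity f)
        {x | h x * (volume.withDensity g) (closedBall y (dist x y)) < ENNReal.ofReal s} ≤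
        ENNReal.ofReal (D * s) := by
  obtain ⟨θ, N, hθ0, hθ1, hN1, hdec⟩ := decay hC hg hA1 hνfin
  set ν := volume.withDensity g with hν
  set w := volume.withDensity f with hw
  have hC0 : 0 < C := by linarith
  have hCw0 : 0 < Cw := by linarith
  have hN0 : 0 < N := by linarith
  set σ0 : ℝ := 1 - (2 / 3) ^ P / Cw with hσ0
  have hσ00 : 0 ≤ σ0 := by
    have : (2 / 3 : ℝ) ^ P / Cw ≤ 1 := by
      rw [div_le_one hCw0]
      exact (pow_le_one₀ (by norm_num) (by norm_num)).trans hCw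
    linarith
  have hσ01 : σ0 < 1 := by
    have : (0 : ℝ) < (2 / 3) ^ P / Cw := by positivity
    linarith
  obtain ⟨b, hb⟩ := exists_pow_lt_of_lt_one (show (0 : ℝ) < (1 / (2 * N)) ^ P by positivity) hσ01
  set σ : ℝ := σ0 ^ (b + 1) with hσ
  have hσnn : 0 ≤ σ := by positivity
  have hσle : σ ≤ (1 / (2 * N)) ^ P := by
    rw [hσ, pow_succ]
    exact (mul_le_of_le_one_right (by positivity) hσ01.le).trans hb.le
  have hσ1 : σ < 1 := pow_lt_one₀ hσ00 hσ01 (by omega)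
  set A : ℝ := 3 ^ (b + 1) with hA
  have hA3 : 1 < A := one_lt_pow₀ (by norm_num) (by omega)
  have hA0 : 0 < A := by positivity
  have hRD : ∀ (y : Fin n → ℝ) (r : ℝ), 0 < r →
      w.real (closedBall y r) ≤ σ * w.real (closedBall y (A * r)) := by
    intro y r hr
    have key : ∀ k : ℕ, w.real (closedBall y r) ≤ σ0 ^ k * w.real (closedBall y (3 ^ k * r)) := by
      intro k
      induction k with
      | zero => simp
      | succ k ih =>
        refine ih.trans ?_
        have := rev_doubling hn hCw hAi hwfin y (r := 3 ^ k * r) (by positivity)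
        rw [pow_succ, mul_assoc]
        refine mul_le_mul_of_nonneg_left ?_ (by positivity)
        refine this.trans (le_of_eq ?_)
        rw [← hw, hσ0]; congr 3; ring
    exact key (b + 1)
  set D1 : ℝ := C * A ^ n with hD1
  have hD11 : 1 ≤ D1 := one_le_mul_of_one_le_of_one_le hC (one_le_pow₀ hA3.le)
  have hD10 : 0 < D1 := by linarith
  set Z : ℝ := Cw * D1 with hZ
  have hZ1 : 1 ≤ Z := one_le_mul_of_one_le_of_one_le hCw hD11
  have hZ0 : 0 < Z := by linarith
  refine ⟨1 + D1 * ((1 - θ)⁻¹ + Z * 2), ?_, ?_⟩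
  · have : 0 < (1 - θ)⁻¹ := inv_pos.2 (by linarith)
    positivity
  intro y s hs
  set E := {x | h x * ν (closedBall y (dist x y)) < ENNReal.ofReal s} with hE
  have hmono : Monotone fun r : ℝ => ν (closedBall y r) := fun a b hab =>
    measure_mono (closedBall_subset_closedBall hab)
  have hEm : MeasurableSet E :=
    measurableSet_lt (hh.mul (hmono.measurable.comp (measurable_id.dist measurable_const)))
      measurable_const
  have hbig : 1 ≤ 1 + D1 * ((1 - θ)⁻¹ + Z * 2) := by
    have : 0 < (1 - θ)⁻¹ := inv_pos.2 (by linarith)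
    have : 0 < D1 * ((1 - θ)⁻¹ + Z * 2) := by positivity
    linarith
  by_cases hall : ∀ r, w.real (closedBall y r) ≤ s
  · calc w E ≤ w univ := measure_mono (subset_univ _)
      _ = ⨆ k : ℕ, w (closedBall y k) := by
        rw [← iUnion_closedBall_nat y]
        apply Monotone.measure_iUnion
        intro a b hab
        exact closedBall_subset_closedBall (by exact_mod_cast hab)
      _ ≤ ENNReal.ofReal s := by
        apply iSup_le
        intro k
        rw [ENNReal.le_ofReal_iff_toReal_le (hwfin _ _).ne hs.le]
        exact hall k
      _ ≤ _ := ENNReal.ofReal_le_ofReal (le_mul_of_one_le_left hs.le hbig)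
  push Not at hall
  obtain ⟨r0, hr0⟩ := hall
  obtain ⟨r1, hr1, hr1s⟩ : ∃ r1, 0 < r1 ∧ s < w.real (closedBall y r1) := by
    refine ⟨max r0 1, by positivity, hr0.trans_le ?_⟩
    exact measureReal_mono (closedBall_subset_closedBall (le_max_left _ _)) (hwfin _ _).ne
  obtain ⟨R, hR, hRs, hRs2⟩ : ∃ R, 0 < R ∧ w.real (closedBall y R) ≤ s ∧
      s < w.real (closedBall y (A * R)) := by
    have hdecr : ∀ k : ℕ, w.real (closedBall y (r1 * (A⁻¹) ^ k)) ≤ σ ^ k * w.real (closedBall y r1) := by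
      intro k
      induction k with
      | zero => simp
      | succ k ih =>
        have := hRD y (r1 * A⁻¹ ^ (k + 1)) (by positivity)
        have e : A * (r1 * A⁻¹ ^ (k + 1)) = r1 * A⁻¹ ^ k := by
          rw [pow_succ]; field_simp
        rw [e] at this
        refine this.trans ?_
        rw [pow_succ', mul_assoc]
        exact mul_le_mul_of_nonneg_left ih hσnn
    have hex : ∃ k : ℕ, w.real (closedBall y (r1 * (A⁻¹) ^ k)) ≤ s := by
      have ht := (tendsto_pow_atTop_nhds_zero_of_lt_one hσnn hσ1).mul_const (w.real (closedBall y r1))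
      rw [zero_mul] at ht
      obtain ⟨k, hk⟩ := (ht.eventually (gt_mem_nhds hs)).exists
      exact ⟨k, (hdecr k).trans hk.le⟩
    classical
    obtain ⟨k, hk⟩ : ∃ k, k = Nat.find hex := ⟨_, rfl⟩
    have h1 : w.real (closedBall y (r1 * (A⁻¹) ^ k)) ≤ s := by rw [hk]; exact Nat.find_spec hex
    rcases k with _ | k
    · simp at h1; linarith
    · have h2 := Nat.find_min hex (m := k) (by omega)
      push Not at h2
      refine ⟨r1 * A⁻¹ ^ (k + 1), by positivity, h1, ?_⟩
      have e : A * (r1 * A⁻¹ ^ (k + 1)) = r1 * A⁻¹ ^ k := by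
        rw [pow_succ]; field_simp
      rwa [e]
  have hWi : ∀ i : ℕ, s ≤ σ ^ i * w.real (closedBall y (R * A ^ (i + 1))) := by
    intro i
    induction i with
    | zero => simpa [mul_comm] using hRs2.le
    | succ i ih =>
      refine ih.trans ?_
      rw [pow_succ σ, mul_assoc]
      refine mul_le_mul_of_nonneg_left ?_ (by positivity)
      refine (hRD y _ (by positivity)).trans (le_of_eq ?_)
      congr 3; ring
  have hEi : ∀ i : ℕ, w (E ∩ (closedBall y (R * A ^ (i + 1)) \ closedBall y (R * A ^ i))) ≤
      ENNReal.ofReal (s * D1 * (θ ^ i + Z * (1 / 2) ^ i)) := by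
    intro i
    set F := E ∩ (closedBall y (R * A ^ (i + 1)) \ closedBall y (R * A ^ i)) with hF
    have hFm : MeasurableSet F := hEm.inter (measurableSet_closedBall.diff measurableSet_closedBall)
    have hFs : F ⊆ closedBall y (R * A ^ (i + 1)) := inter_subset_right.trans sdiff_subset
    have hνF : ν F ≠ ⊤ := ((measure_mono hFs).trans_lt (hνfin _ _)).ne
    have hwF : w F ≠ ⊤ := ((measure_mono hFs).trans_lt (hwfin _ _)).ne
    have c1 : w F * ν (closedBall y (R * A ^ i)) ≤ ENNReal.ofReal s * ν F := by
      rw [hw, hν, withDensity_apply _ hFm, withDensity_apply _ hFm, ← lintegral_mul_const _ hf,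
        ← lintegral_const_mul _ hg]
      apply lintegral_mono_ae
      rw [ae_restrict_iff' hFm]
      filter_upwards [hfgh] with x hx hxF
      rw [hx]
      have hd : R * A ^ i ≤ dist x y := by
        have := hxF.2.2
        rw [mem_closedBall, not_le] at this
        exact this.le
      calc g x * h x * ν (closedBall y (R * A ^ i)) ≤ g x * (h x * ν (closedBall y (dist x y))) := by
            rw [mul_assoc]; gcongr
        _ ≤ g x * ENNReal.ofReal s := by gcongr; exact (hxF.1 : _ < _).le
        _ = _ := mul_comm _ _
    have c1' : w.real F * ν.real (closedBall y (R * A ^ i)) ≤ s * ν.real F := by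
      have := ENNReal.toReal_mono (ENNReal.mul_ne_top ENNReal.ofReal_ne_top hνF) c1
      rwa [ENNReal.toReal_mul, ENNReal.toReal_mul, ENNReal.toReal_ofReal hs.le] at this
    have hq0 : 0 < ν.real (closedBall y (R * A ^ i)) :=
      ENNReal.toReal_pos (hνpos _ _ (by positivity)).ne' (hνfin _ _).ne
    have c2 : ν.real (closedBall y (R * A ^ (i + 1))) ≤ D1 * ν.real (closedBall y (R * A ^ i)) := by
      have hsub : closedBall y (R * A ^ i) ⊆ closedBall y (R * A ^ (i + 1)) :=
        closedBall_subset_closedBall (by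
          apply mul_le_mul_of_nonneg_left _ hR.le
          exact pow_le_pow_right₀ hA3.le (by omega))
      have := A1b_cmp_real hC0.le hg hA1 hνfin (by positivity) measurableSet_closedBall hsub
      rw [vol_cb _ (by positivity), ← hν] at this
      have hp : 0 < (2 * (R * A ^ i)) ^ n := by positivity
      refine le_of_mul_le_mul_right (a := (2 * (R * A ^ i)) ^ n) (this.trans (le_of_eq ?_)) hp
      have : (2 * (R * A ^ (i + 1))) ^ n = A ^ n * (2 * (R * A ^ i)) ^ n := by
        rw [← mul_pow]; congr 1; ring
      rw [this, hD1]; ring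
    have c3 : ν.real F ≤ ν.real (closedBall y (R * A ^ (i + 1))) :=
      measureReal_mono hFs (hνfin _ _).ne
    set q0 := ν.real (closedBall y (R * A ^ i))
    set q1 := ν.real (closedBall y (R * A ^ (i + 1)))
    have c4 : w.real F ≤ D1 * s := by
      refine le_of_mul_le_mul_right (a := q0) ?_ hq0
      nlinarith
    have c5 := hAi y (R * A ^ (i + 1)) (by positivity) F hFm hFs
    rw [← hw] at c5
    have c6 := hWi i
    set W := w.real (closedBall y (R * A ^ (i + 1)))
    set φ := volume.real F / (2 * (R * A ^ (i + 1))) ^ n with hφ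
    have hφ0 : 0 ≤ φ := by rw [hφ]; positivity
    have hW0 : 0 < W := by
      by_contra hcon
      have h1 : σ ^ i * W ≤ 0 := mul_nonpos_of_nonneg_of_nonpos (by positivity) (not_lt.1 hcon)
      linarith
    have c7 : φ ^ P ≤ Z * σ ^ i := by
      refine le_of_mul_le_mul_right (a := W) ?_ hW0
      calc φ ^ P * W ≤ Cw * w.real F := c5
        _ ≤ Cw * (D1 * s) := by gcongr
        _ = Z * s := by rw [hZ]; ring
        _ ≤ Z * (σ ^ i * W) := by gcongr
        _ = _ := by ring
    have c8 : φ ≤ Z * (1 / (2 * N)) ^ i := by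
      refine le_of_pow_le_pow_left₀ hP (by positivity) (c7.trans ?_)
      rw [mul_pow]
      apply mul_le_mul (le_self_pow₀ hZ1 hP) _ (by positivity) (by positivity)
      calc σ ^ i ≤ ((1 / (2 * N)) ^ P) ^ i := by gcongr
        _ = _ := by rw [← pow_mul, ← pow_mul, mul_comm P i]
    have c9 := hdec y (R * A ^ (i + 1)) (by positivity) F hFm hFs i
    have hq1 : 0 ≤ q1 := measureReal_nonneg
    have c10 : ν.real F ≤ q1 * (θ ^ i + Z * (1 / 2) ^ i) := by
      have e : N ^ i * (1 / (2 * N)) ^ i = (1 / 2) ^ i := by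
        rw [← mul_pow]; congr 1; field_simp
      calc ν.real F ≤ θ ^ i * q1 + N ^ i * q1 * φ := c9
        _ ≤ θ ^ i * q1 + N ^ i * q1 * (Z * (1 / (2 * N)) ^ i) := by gcongr
        _ = q1 * (θ ^ i + Z * (N ^ i * (1 / (2 * N)) ^ i)) := by ring
        _ = _ := by rw [e]
    rw [ENNReal.le_ofReal_iff_toReal_le hwF (by positivity)]
    refine le_of_mul_le_mul_right (a := q0) ?_ hq0
    calc w.real F * q0 ≤ s * ν.real F := c1'
      _ ≤ s * (q1 * (θ ^ i + Z * (1 / 2) ^ i)) := by gcongr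
      _ ≤ s * ((D1 * q0) * (θ ^ i + Z * (1 / 2) ^ i)) := by gcongr
      _ = _ := by ring
  have hcover : E ⊆ closedBall y R ∪ ⋃ i : ℕ,
      (E ∩ (closedBall y (R * A ^ (i + 1)) \ closedBall y (R * A ^ i))) := by
    intro x hx
    have hex : ∃ k : ℕ, x ∈ closedBall y (R * A ^ k) := by
      obtain ⟨k, hk⟩ := pow_unbounded_of_one_lt (dist x y / R) hA3
      refine ⟨k, ?_⟩
      rw [mem_closedBall]
      rw [div_lt_iff₀ hR] at hk
      linarith
    classical
    obtain ⟨k, hk⟩ : ∃ k, k = Nat.find hex := ⟨_, rfl⟩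
    have h1 : x ∈ closedBall y (R * A ^ k) := by rw [hk]; exact Nat.find_spec hex
    rcases k with _ | k
    · left; simpa using h1
    · right
      exact mem_iUnion.2 ⟨k, hx, h1, Nat.find_min hex (m := k) (by omega)⟩
  have hs1 : Summable fun i : ℕ => θ ^ i := summable_geometric_of_lt_one hθ0.le hθ1
  have hs2 : Summable fun i : ℕ => (1 / 2 : ℝ) ^ i := summable_geometric_two
  have hs3 : HasSum (fun i : ℕ => s * D1 * (θ ^ i + Z * (1 / 2) ^ i)) (s * D1 * ((1 - θ)⁻¹ + Z * 2)) :=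
    ((hasSum_geometric_of_lt_one hθ0.le hθ1).add (hasSum_geometric_two.mul_left Z)).mul_left _
  calc w E ≤ w (closedBall y R) + ∑' i : ℕ,
      w (E ∩ (closedBall y (R * A ^ (i + 1)) \ closedBall y (R * A ^ i))) := by
        refine (measure_mono hcover).trans ((measure_union_le _ _).trans ?_)
        gcongr
        exact measure_iUnion_le _
    _ ≤ ENNReal.ofReal s + ∑' i : ℕ, ENNReal.ofReal (s * D1 * (θ ^ i + Z * (1 / 2) ^ i)) := by
        gcongr with i
        · rw [ENNReal.le_ofReal_iff_toReal_le (hwfin _ _).ne hs.le]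
          exact hRs
        · exact hEi i
    _ = ENNReal.ofReal ((1 + D1 * ((1 - θ)⁻¹ + Z * 2)) * s) := by
        rw [← ENNReal.ofReal_tsum_of_nonneg (fun i => by positivity) hs3.summable, hs3.tsum_eq,
          ← ENNReal.ofReal_add hs.le]
        · congr 1; ring
        · have : 0 < (1 - θ)⁻¹ := inv_pos.2 (by linarith)
          positivity


lemma dyadic_bound (k : ℝ≥0∞) {τ : ℝ} (hτ : 0 < τ) :
    k ≤ ENNReal.ofReal τ + ∑' j : ℕ, (if ENNReal.ofReal (2 ^ j * τ) < k then
      ENNReal.ofReal (2 ^ (j + 1) * τ) else 0) := by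
  by_cases h1 : k ≤ ENNReal.ofReal τ
  · exact h1.trans le_self_add
  push Not at h1
  by_cases hk : k = ⊤
  · subst hk
    have : ∑' j : ℕ, (if ENNReal.ofReal (2 ^ j * τ) < (⊤ : ℝ≥0∞) then
      ENNReal.ofReal (2 ^ (j + 1) * τ) else 0) = ⊤ := by
      have hT := ENNReal.tsum_const_eq_top_of_ne_zero (α := ℕ) (c := ENNReal.ofReal τ) (by simpa using hτ)
      rw [eq_top_iff]
      refine hT.ge.trans (ENNReal.tsum_le_tsum fun j => ?_)
      rw [if_pos ENNReal.ofReal_lt_top]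
      apply ENNReal.ofReal_le_ofReal
      exact le_mul_of_one_le_left hτ.le (one_le_pow₀ (by norm_num))
    rw [this]; simp
  have hex : ∃ j : ℕ, k ≤ ENNReal.ofReal (2 ^ (j + 1) * τ) := by
    obtain ⟨j, hj⟩ := pow_unbounded_of_one_lt (k.toReal / τ) (one_lt_two (α := ℝ))
    refine ⟨j, ?_⟩
    rw [ENNReal.le_ofReal_iff_toReal_le hk (by positivity)]
    rw [div_lt_iff₀ hτ] at hj
    refine hj.le.trans ?_
    gcongr
    · norm_num
    · omega
  classical
  obtain ⟨j, hj⟩ : ∃ j, j = Nat.find hex := ⟨_, rfl⟩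
  have h2 : k ≤ ENNReal.ofReal (2 ^ (j + 1) * τ) := by rw [hj]; exact Nat.find_spec hex
  have h3 : ENNReal.ofReal (2 ^ j * τ) < k := by
    rcases j with _ | j
    · simpa using h1
    · exact not_le.1 (Nat.find_min hex (m := j) (by omega))
  refine h2.trans (le_trans ?_ le_add_self)
  refine le_trans ?_ (ENNReal.le_tsum j)
  rw [if_pos h3]

lemma kolmogorov {Ω : Type*} [MeasurableSpace Ω] (w : Measure Ω) {p D : ℝ} (hp : 1 < p)
    (hD : 0 ≤ D) {k : Ω → ℝ≥0∞} (hk : Measurable k)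
    (hw : ∀ τ : ℝ, 0 < τ → w {x | ENNReal.ofReal τ < k x} ≤ ENNReal.ofReal (D * τ ^ (-p)))
    (F : Set Ω) (hF : w F ≠ ⊤) :
    ∫⁻ x in F, k x ∂w ≤ ENNReal.ofReal (1 + 2 * D * (1 - 2 ^ (1 - p))⁻¹) * (w F) ^ (1 - 1 / p) := by
  by_cases h0 : w F = 0
  · rw [Measure.restrict_eq_zero.2 h0]; simp
  set a := (w F).toReal with ha
  have ha0 : 0 < a := ENNReal.toReal_pos h0 hF
  have hwa : w F = ENNReal.ofReal a := (ENNReal.ofReal_toReal hF).symm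
  set τ := a ^ (-1 / p) with hτdef
  have hτ : 0 < τ := by positivity
  have hm : ∀ j : ℕ, MeasurableSet {x | ENNReal.ofReal (2 ^ j * τ) < k x} := fun j =>
    measurableSet_lt measurable_const hk
  have hx1 : (2 : ℝ) ^ (1 - p) < 1 := Real.rpow_lt_one_of_one_lt_of_neg (by norm_num) (by linarith)
  have hx0 : (0 : ℝ) < 2 ^ (1 - p) := by positivity
  have hsum : HasSum (fun j : ℕ => 2 * D * τ ^ (1 - p) * ((2 : ℝ) ^ (1 - p)) ^ j)
      (2 * D * τ ^ (1 - p) * (1 - 2 ^ (1 - p))⁻¹) :=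
    (hasSum_geometric_of_lt_one hx0.le hx1).mul_left _
  have hinv : 0 < (1 - (2 : ℝ) ^ (1 - p))⁻¹ := inv_pos.2 (by linarith)
  calc ∫⁻ x in F, k x ∂w
      ≤ ∫⁻ x in F, (ENNReal.ofReal τ + ∑' j : ℕ, ({x | ENNReal.ofReal (2 ^ j * τ) < k x}.indicator
          (fun _ => ENNReal.ofReal (2 ^ (j + 1) * τ)) x)) ∂w := by
        apply lintegral_mono
        intro x
        refine (dyadic_bound (k x) hτ).trans (le_of_eq ?_)
        congr 2 with j
        simp only [indicator, mem_ofPred_eq]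
    _ = ENNReal.ofReal τ * w F + ∑' j : ℕ, ENNReal.ofReal (2 ^ (j + 1) * τ) *
          (w.restrict F) {x | ENNReal.ofReal (2 ^ j * τ) < k x} := by
        rw [lintegral_add_left measurable_const, lintegral_tsum
          (fun j => (measurable_const.indicator (hm j)).aemeasurable), setLIntegral_const]
        congr 2 with j
        rw [lintegral_indicator_const (hm j)]
    _ ≤ ENNReal.ofReal τ * ENNReal.ofReal a +
        ∑' j : ℕ, ENNReal.ofReal (2 * D * τ ^ (1 - p) * ((2 : ℝ) ^ (1 - p)) ^ j) := by
        rw [hwa]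
        gcongr with j
        refine (mul_le_mul_right ((Measure.restrict_apply_le _ _).trans (hw (2 ^ j * τ) (by positivity))) _).trans ?_
        rw [← ENNReal.ofReal_mul (by positivity)]
        apply ENNReal.ofReal_le_ofReal
        apply le_of_eq
        have e1 : (2 ^ j * τ) ^ (-p) = ((2 : ℝ) ^ (-p)) ^ j * τ ^ (-p) := by
          clear_value τ
          rw [Real.mul_rpow (by positivity) hτ.le]
          congr 1
          rw [← Real.rpow_natCast, ← Real.rpow_natCast,
            ← Real.rpow_mul (by norm_num), ← Real.rpow_mul (by norm_num), mul_comm]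
        have e2 : (2 : ℝ) ^ (1 - p) = 2 * 2 ^ (-p) := by
          rw [sub_eq_add_neg, Real.rpow_add (by norm_num), Real.rpow_one]
        have e3 : τ ^ (1 - p) = τ * τ ^ (-p) := by
          rw [sub_eq_add_neg, Real.rpow_add hτ, Real.rpow_one]
        rw [e1, e2, e3, mul_pow, pow_succ]; ring
    _ = ENNReal.ofReal (τ * a + 2 * D * τ ^ (1 - p) * (1 - 2 ^ (1 - p))⁻¹) := by
        rw [← ENNReal.ofReal_tsum_of_nonneg (fun j => by positivity) hsum.summable, hsum.tsum_eq,
          ← ENNReal.ofReal_mul hτ.le, ← ENNReal.ofReal_add (by positivity) (by positivity)]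
    _ = _ := by
        rw [hwa, ENNReal.ofReal_rpow_of_pos ha0, ← ENNReal.ofReal_mul (by positivity)]
        congr 1
        have e1 : τ * a = a ^ (1 - 1 / p) := by
          rw [hτdef]
          nth_rewrite 2 [← Real.rpow_one a]
          rw [← Real.rpow_add ha0]; congr 1; ring
        have e2 : τ ^ (1 - p) = a ^ (1 - 1 / p) := by
          rw [hτdef, ← Real.rpow_mul ha0.le]; congr 1; field_simp; ring
        rw [e1, e2]; ring

lemma lt_kernel {a b : ℝ≥0∞} {p τ : ℝ} (hp : 1 < p) (hτ : 0 < τ) (hb0 : b ≠ 0)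
    (hbt : b ≠ ⊤) (h : ENNReal.ofReal τ < a ^ (-1 / p) / b) :
    b ^ p * a < ENNReal.ofReal (τ ^ (-p)) := by
  have hp0 : 0 < p := by linarith
  have e : a ^ (-1 / p) / b = (a ^ (1 / p) * b)⁻¹ := by
    rw [ENNReal.mul_inv (Or.inr hbt) (Or.inr hb0), ENNReal.div_eq_inv_mul, mul_comm, neg_div,
      ENNReal.rpow_neg]
  rw [e, ENNReal.lt_inv_iff_lt_inv] at h
  have h2 := ENNReal.rpow_lt_rpow h hp0
  rw [ENNReal.mul_rpow_of_nonneg _ _ hp0.le, ← ENNReal.rpow_mul, one_div_mul_cancel hp0.ne',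
    ENNReal.rpow_one, mul_comm, ← ENNReal.ofReal_inv_of_pos hτ,
    ENNReal.ofReal_rpow_of_pos (by positivity), Real.inv_rpow hτ.le, ← Real.rpow_neg hτ.le] at h2
  exact h2

lemma kern_meas {n : ℕ} {g : (Fin n → ℝ) → ℝ≥0∞} (hg : Measurable g) :
    Measurable fun z : (Fin n → ℝ) × (Fin n → ℝ) =>
      (volume.withDensity g) (closedBall z.2 (dist z.1 z.2)) := by
  have h1 : (fun z : (Fin n → ℝ) × (Fin n → ℝ) =>
      (volume.withDensity g) (closedBall z.2 (dist z.1 z.2))) = fun z =>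
      ∫⁻ x, ({q : ((Fin n → ℝ) × (Fin n → ℝ)) × (Fin n → ℝ) | dist q.2 q.1.2 ≤ dist q.1.1 q.1.2}.indicator
        (fun q => g q.2)) (z, x) := by
    ext z
    rw [withDensity_apply _ measurableSet_closedBall, ← lintegral_indicator measurableSet_closedBall]
    rfl
  rw [h1]
  apply Measurable.lintegral_prod_right'
  apply (hg.comp measurable_snd).indicator
  apply measurableSet_le <;> fun_prop

set_option maxHeartbeats 400000 in
lemma weak_X {n m : ℕ} (hm : 0 < m) {g vv f : (Fin n → ℝ) → ℝ≥0∞} {p q D : ℝ}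
    (hp : 1 < p) (hpq : p = m * q) (hD : 0 ≤ D)
    (hg : Measurable g) (hv : Measurable vv)
    (hv0 : ∀ᵐ x, vv x ≠ 0) (hvt : ∀ x, vv x ≠ ⊤)
    (hwfin : ∀ x r, (volume.withDensity f) (closedBall x r) < ⊤)
    (hker : ∀ (y : Fin n → ℝ) (s : ℝ), 0 < s →
      (volume.withDensity f)
        {x | vv x ^ q * (volume.withDensity g) (closedBall y (dist x y)) < ENNReal.ofReal s} ≤
        ENNReal.ofReal (D * s))
    (F : Fin m → (Fin n → ℝ) → ℝ≥0∞) (hF : ∀ i, Measurable (F i)) (c : ℝ≥0∞) (t : ℝ) (ht : 0 < t) :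
    ENNReal.ofReal t * ((volume.withDensity f) {x | ENNReal.ofReal t * vv x ≤ c * ∏ i,
      ∫⁻ y, F i y * ((volume.withDensity g) (closedBall y (dist x y))) ^ (-1 / p)}) ^ (1 / q) ≤
      c * ENNReal.ofReal (1 + 2 * D * (1 - 2 ^ (1 - p))⁻¹) ^ m * ∏ i, ∫⁻ y, F i y := by
  set ν := volume.withDensity g with hν
  set w := volume.withDensity f with hw
  have hp0 : 0 < p := by linarith
  have hm0 : (0 : ℝ) < m := by exact_mod_cast hm
  have hq0 : 0 < q := by
    by_contra hcon
    nlinarith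
  have hmne : (m : ℝ) ≠ 0 := hm0.ne'
  set K := ENNReal.ofReal (1 + 2 * D * (1 - 2 ^ (1 - p))⁻¹) with hK
  have hKm : Measurable fun z : (Fin n → ℝ) × (Fin n → ℝ) => (ν (closedBall z.2 (dist z.1 z.2))) ^ (-1 / p) :=
    (kern_meas hg).pow_const _
  have hK1 : ∀ x : Fin n → ℝ, Measurable fun y => (ν (closedBall y (dist x y))) ^ (-1 / p) := by
    intro x
    have := hKm.comp (measurable_prodMk_left (x := x))
    exact this
  have hK2 : ∀ y : Fin n → ℝ, Measurable fun x => (ν (closedBall y (dist x y))) ^ (-1 / p) := by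
    intro y
    have := hKm.comp (measurable_prodMk_right (y := y))
    exact this
  let T : Fin m → (Fin n → ℝ) → ℝ≥0∞ := fun i x => ∫⁻ y, F i y * (ν (closedBall y (dist x y))) ^ (-1 / p)
  have hTm : ∀ i, Measurable (T i) := fun i =>
    Measurable.lintegral_prod_right' (f := fun z : (Fin n → ℝ) × (Fin n → ℝ) =>
      F i z.2 * (ν (closedBall z.2 (dist z.1 z.2))) ^ (-1 / p)) (((hF i).comp measurable_snd).mul hKm)
  set E := {x | ENNReal.ofReal t * vv x ≤ c * ∏ i, T i x} with hE
  change ENNReal.ofReal t * (w E) ^ (1 / q) ≤ _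
  let V : (Fin n → ℝ) → ℝ≥0∞ := fun x => vv x ^ (1 / (m : ℝ))
  have hVm : Measurable V := hv.pow_const _
  have hww : w ≪ volume := withDensity_absolutelyContinuous _ _
  have hvw : ∀ᵐ x ∂w, vv x ≠ 0 := hww.ae_le hv0
  have hV0 : ∀ x, vv x ≠ 0 → V x ≠ 0 := fun x hx => by
    simp only [V, ne_eq, ENNReal.rpow_eq_zero_iff]; rintro (⟨h, _⟩ | ⟨h, _⟩)
    · exact hx h
    · exact hvt x h
  have hVt : ∀ x, V x ≠ ⊤ := fun x => ENNReal.rpow_ne_top_of_nonneg (by positivity) (hvt x)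
  -- kernel estimate
  have hkol : ∀ (y : Fin n → ℝ) (S : Set (Fin n → ℝ)), w S ≠ ⊤ →
      ∫⁻ x in S, (ν (closedBall y (dist x y))) ^ (-1 / p) / V x ∂w ≤ K * (w S) ^ (1 - 1 / p) := by
    intro y S hS
    apply kolmogorov w hp hD _ _ S hS
    · exact (hK2 y).div hVm
    · intro τ hτ
      refine le_trans (measure_mono_ae ?_) (hker y (τ ^ (-p)) (by positivity))
      filter_upwards [hvw] with x hx hxt
      have h1 := lt_kernel hp hτ (hV0 x hx) (hVt x) hxt
      have h2 : V x ^ p = vv x ^ q := by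
        simp only [V]
        rw [← ENNReal.rpow_mul]; congr 1
        rw [hpq]; field_simp
      rw [h2] at h1
      exact h1
  have hT : ∀ (i : Fin m) (S : Set (Fin n → ℝ)), w S ≠ ⊤ →
      ∫⁻ x in S, T i x / V x ∂w ≤ (∫⁻ y, F i y) * (K * (w S) ^ (1 - 1 / p)) := by
    intro i S hS
    calc ∫⁻ x in S, T i x / V x ∂w
        = ∫⁻ x in S, (∫⁻ y, F i y * ((ν (closedBall y (dist x y))) ^ (-1 / p) / V x)) ∂w := by
          apply lintegral_congr
          intro x
          simp only [T, div_eq_mul_inv]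
          rw [← lintegral_mul_const]
          · congr 1 with y; ring
          · exact (hF i).mul (hK1 x)
      _ = ∫⁻ y, (∫⁻ x in S, F i y * ((ν (closedBall y (dist x y))) ^ (-1 / p) / V x) ∂w) := by
          rw [lintegral_lintegral_swap]
          exact (((hF i).comp measurable_snd).mul (hKm.div (hVm.comp measurable_fst))).aemeasurable
      _ = ∫⁻ y, F i y * (∫⁻ x in S, ((ν (closedBall y (dist x y))) ^ (-1 / p) / V x) ∂w) := by
          apply lintegral_congr
          intro y
          rw [lintegral_const_mul]
          exact (hK2 y).div hVm
      _ ≤ ∫⁻ y, F i y * (K * (w S) ^ (1 - 1 / p)) := by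
          gcongr with y
          exact hkol y S hS
      _ = _ := lintegral_mul_const _ (hF i)
  have hmain : ∀ k : ℕ, ENNReal.ofReal t * (w (E ∩ closedBall 0 k)) ^ (1 / q) ≤
      c * K ^ m * ∏ i, ∫⁻ y, F i y := by
    intro k
    set S := E ∩ closedBall 0 k with hS
    have hSt : w S ≠ ⊤ := ((measure_mono inter_subset_right).trans_lt (hwfin _ _)).ne
    have hEm : MeasurableSet E := by
      apply measurableSet_le (measurable_const.mul hv)
      exact measurable_const.mul (Finset.measurable_prod _ fun i _ => hTm i)
    have hSm : MeasurableSet S := hEm.inter measurableSet_closedBall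
    by_cases hS0 : w S = 0
    · rw [hS0, ENNReal.zero_rpow_of_pos (by positivity)]; simp
    have h1 : ENNReal.ofReal t ^ (1 / (m : ℝ)) * w S ≤
        c ^ (1 / (m : ℝ)) * ∏ i, (∫⁻ x in S, T i x / V x ∂w) ^ (1 / (m : ℝ)) := by
      calc ENNReal.ofReal t ^ (1 / (m : ℝ)) * w S
          = ∫⁻ x in S, ENNReal.ofReal t ^ (1 / (m : ℝ)) ∂w := (setLIntegral_const _ _).symm
        _ ≤ ∫⁻ x in S, c ^ (1 / (m : ℝ)) * ∏ i, (T i x / V x) ^ (1 / (m : ℝ)) ∂w := by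
          apply lintegral_mono_ae
          rw [ae_restrict_iff' hSm]
          filter_upwards [hvw] with x hx hxS
          rw [ENNReal.prod_rpow_of_nonneg (by positivity), ← ENNReal.mul_rpow_of_nonneg _ _ (by positivity)]
          apply ENNReal.rpow_le_rpow _ (by positivity)
          have h2 : ENNReal.ofReal t * vv x ≤ c * ∏ i, T i x := hxS.1
          have h3 : ∏ i, (T i x / V x) = (∏ i, T i x) / vv x := by
            simp only [div_eq_mul_inv]
            rw [Finset.prod_mul_distrib, Finset.prod_const, Finset.card_univ, Fintype.card_fin,
              ← ENNReal.inv_pow, ← ENNReal.rpow_natCast, ← ENNReal.rpow_mul, one_div_mul_cancel hmne,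
              ENNReal.rpow_one]
          rw [h3, ← mul_div_assoc, ENNReal.le_div_iff_mul_le (Or.inl hx) (Or.inl (hvt x))]
          exact h2
        _ = c ^ (1 / (m : ℝ)) * ∫⁻ x in S, ∏ i, (T i x / V x) ^ (1 / (m : ℝ)) ∂w := by
          rw [lintegral_const_mul]
          exact Finset.measurable_prod _ fun i _ => ((hTm i).div hVm).pow_const _
        _ ≤ _ := by
          gcongr
          apply ENNReal.lintegral_prod_norm_pow_le
          · exact fun i _ => ((hTm i).div hVm).aemeasurable
          · simp; field_simp
          · intro i _; positivity
    have h2 : ENNReal.ofReal t ^ (1 / (m : ℝ)) * w S ≤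
        c ^ (1 / (m : ℝ)) * ∏ i, ((∫⁻ y, F i y) * (K * (w S) ^ (1 - 1 / p))) ^ (1 / (m : ℝ)) := by
      refine h1.trans ?_
      gcongr with i
      exact hT i S hSt
    rw [ENNReal.prod_rpow_of_nonneg (by positivity), ← ENNReal.mul_rpow_of_nonneg _ _ (by positivity),
      Finset.prod_mul_distrib, Finset.prod_const, Finset.card_univ, Fintype.card_fin] at h2
    have h3 := ENNReal.rpow_le_rpow h2 hm0.le
    rw [ENNReal.mul_rpow_of_nonneg _ _ hm0.le, ← ENNReal.rpow_mul, ← ENNReal.rpow_mul,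
      one_div_mul_cancel hmne, ENNReal.rpow_one, ENNReal.rpow_one, mul_pow, ← ENNReal.rpow_natCast (_ ^ (1 - 1 / p)),
      ← ENNReal.rpow_mul] at h3
    have h4 : (w S) ^ (m : ℝ) = (w S) ^ (1 / q) * (w S) ^ ((1 - 1 / p) * m) := by
      rw [← ENNReal.rpow_add _ _ hS0 hSt]; congr 1
      rw [hpq]; field_simp; ring
    rw [h4] at h3
    have hz0 : (w S) ^ ((1 - 1 / p) * m) ≠ 0 := by
      simp [ENNReal.rpow_eq_zero_iff, hS0, hSt]
    have hzt : (w S) ^ ((1 - 1 / p) * m) ≠ ⊤ := by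
      apply ENNReal.rpow_ne_top_of_nonneg _ hSt
      have : 1 / p < 1 := by rw [div_lt_one hp0]; exact hp
      have : 0 < 1 - 1 / p := by linarith
      positivity
    refine (ENNReal.mul_le_mul_iff_left hz0 hzt).1 ?_
    calc _ ≤ _ := (mul_assoc _ _ _).le
      _ ≤ _ := h3
      _ = _ := by ring
  have htt : ENNReal.ofReal t ≠ 0 := by simpa using ht
  have hsup : w E = ⨆ k : ℕ, w (E ∩ closedBall 0 k) := by
    rw [← Monotone.measure_iUnion, ← inter_iUnion, iUnion_closedBall_nat, inter_univ]
    intro a b hab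
    exact inter_subset_inter_right _ (closedBall_subset_closedBall (by exact_mod_cast hab))
  set X := c * K ^ m * ∏ i, ∫⁻ y, F i y with hX
  have hle : w E ≤ (X / ENNReal.ofReal t) ^ q := by
    rw [hsup]
    apply iSup_le
    intro k
    have h1 : (w (E ∩ closedBall 0 k)) ^ (1 / q) ≤ X / ENNReal.ofReal t := by
      rw [ENNReal.le_div_iff_mul_le (Or.inl htt) (Or.inl ENNReal.ofReal_ne_top), mul_comm]
      exact hmain k
    have h2 := ENNReal.rpow_le_rpow h1 hq0.le
    rwa [← ENNReal.rpow_mul, one_div_mul_cancel hq0.ne', ENNReal.rpow_one] at h2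
  calc ENNReal.ofReal t * (w E) ^ (1 / q) ≤ ENNReal.ofReal t * ((X / ENNReal.ofReal t) ^ q) ^ (1 / q) := by
        gcongr
    _ = X := by
        rw [← ENNReal.rpow_mul, mul_one_div_cancel hq0.ne', ENNReal.rpow_one,
          ENNReal.mul_div_cancel htt ENNReal.ofReal_ne_top]


lemma cube_ball {n : ℕ} (x : Fin n → ℝ) {r : ℝ} (hr : 0 < r) :
    IsCube ((WithLp.ofLp : ESp n → (Fin n → ℝ)) ⁻¹' closedBall x r) := by
  refine ⟨fun i => x i - r, 2 * r, by positivity, ?_⟩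
  ext y
  simp only [mem_preimage, mem_closedBall, mem_ofPred_eq]
  rw [dist_pi_le_iff hr.le]
  refine forall_congr' fun i => ?_
  rw [Real.dist_eq, abs_le]
  constructor
  · rintro ⟨h1, h2⟩; constructor <;> linarith
  · rintro ⟨h1, h2⟩; constructor <;> linarith

lemma setLI {n : ℕ} (G : ESp n → ℝ≥0∞) (B : Set (Fin n → ℝ)) :
    ∫⁻ y in (WithLp.ofLp : ESp n → (Fin n → ℝ)) ⁻¹' B, G y = ∫⁻ x in B, G (WithLp.toLp 2 x) := by
  have h := (EuclideanSpace.volume_preserving_symm_measurableEquiv_toLp (Fin n)).setLIntegral_comp_preimage_emb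
    (MeasurableEquiv.measurableEmbedding _) (fun x => G (WithLp.toLp 2 x)) B
  exact h

lemma LI {n : ℕ} (G : ESp n → ℝ≥0∞) :
    ∫⁻ y, G y = ∫⁻ x : Fin n → ℝ, G (WithLp.toLp 2 x) := by
  have h := setLI G univ
  simpa using h

lemma volB {n : ℕ} (B : Set (Fin n → ℝ)) :
    volume ((WithLp.ofLp : ESp n → (Fin n → ℝ)) ⁻¹' B) = volume B := by
  have h := setLI (fun _ : ESp n => 1) B
  simpa using h

lemma aeX {n : ℕ} {P : ESp n → Prop} (h : ∀ᵐ y, P y) : ∀ᵐ x : Fin n → ℝ, P (WithLp.toLp 2 x) :=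
  (PiLp.volume_preserving_toLp (Fin n)).quasiMeasurePreserving.ae h

lemma volcb_ne {n : ℕ} (x : Fin n → ℝ) {r : ℝ} (hr : 0 < r) :
    volume (closedBall x r) ≠ 0 ∧ volume (closedBall x r) ≠ ⊤ :=
  ⟨(measure_closedBall_pos _ _ hr).ne', measure_closedBall_lt_top.ne⟩

/-- product of ENNReal bounded with nonzero factors -/
lemma prod_ne_top_of_le {ι : Type*} [Fintype ι] {b : ι → ℝ≥0∞} {A C : ℝ≥0∞} (hA : A ≠ 0)
    (hb : ∀ i, b i ≠ ⊤) (hC : C ≠ ⊤) (h : A * ∏ i, (b i)⁻¹ ≤ C) :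
    A ≠ ⊤ ∧ (∀ i, b i ≠ 0) ∧ A ≤ C * ∏ i, b i := by
  have hpos : ∏ i, (b i)⁻¹ ≠ 0 := Finset.prod_ne_zero_iff.2 fun i _ => ENNReal.inv_ne_zero.2 (hb i)
  have hne : A * ∏ i, (b i)⁻¹ ≠ ⊤ := (h.trans_lt hC.lt_top).ne
  have hAt : A ≠ ⊤ := by
    rintro rfl
    exact hne (ENNReal.top_mul hpos)
  have hPt : ∏ i, (b i)⁻¹ ≠ ⊤ := by
    intro hh
    rw [hh] at hne
    exact hne (ENNReal.mul_top hA)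
  have hb0 : ∀ i, b i ≠ 0 := by
    classical
    intro i hi
    apply hPt
    rw [← Finset.mul_prod_erase _ _ (Finset.mem_univ i), hi, ENNReal.inv_zero]
    apply ENNReal.top_mul
    exact Finset.prod_ne_zero_iff.2 fun j _ => ENNReal.inv_ne_zero.2 (hb j)
  refine ⟨hAt, hb0, ?_⟩
  calc A = A * ∏ i, ((b i)⁻¹ * b i) := by
        rw [Finset.prod_congr rfl (fun i _ => ENNReal.inv_mul_cancel (hb0 i) (hb i))]; simp
    _ = A * (∏ i, (b i)⁻¹) * ∏ i, b i := by rw [Finset.prod_mul_distrib, mul_assoc]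
    _ ≤ _ := by gcongr

lemma A11_X {n m : ℕ} (hm : 0 < m) {q : ℝ} (hq : 0 < q) (u : Fin m → ESp n → ℝ)
    (hu : ∀ i, IsWeight (u i)) (hA : A11 (fun i x => u i x ^ ((m : ℝ) * q)))
    (g : (Fin n → ℝ) → ℝ≥0∞) (hg : ∀ x, g x = ENNReal.ofReal (∏ i, u i (WithLp.toLp 2 x) ^ q)) :
    ∃ C : ℝ≥0∞, C ≠ ⊤ ∧ ∀ (x : Fin n → ℝ) (r : ℝ), 0 < r →
      (volume.withDensity g) (closedBall x r) ≠ ⊤ ∧ (volume.withDensity g) (closedBall x r) ≠ 0 ∧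
      ∃ a : Fin m → ℝ≥0∞, (∀ i, ∀ᵐ y, y ∈ closedBall x r → a i ≤ ENNReal.ofReal (u i (WithLp.toLp 2 y))) ∧
        (volume.withDensity g) (closedBall x r) ^ (1 / q) ≤
          C * volume (closedBall x r) ^ (1 / q) * ∏ i, a i := by
  obtain ⟨C, hC, hA⟩ := hA
  have hm0 : (0 : ℝ) < m := by exact_mod_cast hm
  refine ⟨C ^ (1 / ((m : ℝ) * q)), ENNReal.rpow_ne_top_of_nonneg (by positivity) hC.ne, ?_⟩
  intro x r hr
  obtain ⟨hv0, hvt⟩ := volcb_ne x hr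
  have h := hA _ (cube_ball x hr)
  set b : Fin m → ℝ≥0∞ := fun i => essInf (fun x => ENNReal.ofReal (u i x ^ ((m : ℝ) * q)))
    (volume.restrict ((WithLp.ofLp : ESp n → (Fin n → ℝ)) ⁻¹' closedBall x r)) with hb
  have hgm : Measurable g := by
    have : g = fun x => ENNReal.ofReal (∏ i, u i (WithLp.toLp 2 x) ^ q) := funext hg
    rw [this]
    apply Measurable.ennreal_ofReal
    apply Finset.measurable_prod
    intro i _
    exact ((hu i).1.comp (WithLp.measurable_toLp _ _)).pow_const _
  have hint : ∫⁻ x in (WithLp.ofLp : ESp n → (Fin n → ℝ)) ⁻¹' closedBall x r,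
      ENNReal.ofReal (∏ i, (u i x ^ ((m : ℝ) * q)) ^ ((m : ℝ)⁻¹)) =
      (volume.withDensity g) (closedBall x r) := by
    rw [withDensity_apply _ measurableSet_closedBall, setLI]
    apply lintegral_congr
    intro y
    rw [hg]
    congr 1
    apply Finset.prod_congr rfl
    intro i _
    rw [← Real.rpow_mul ((hu i).2.1 _)]
    congr 1
    field_simp
  rw [hint, volB] at h
  change ((volume (closedBall x r))⁻¹ * (volume.withDensity g) (closedBall x r)) ^ (m : ℝ) *
    ∏ i, (b i)⁻¹ ≤ C at h
  have hble : ∀ i, ∀ᵐ y, y ∈ closedBall x r → b i ≤ ENNReal.ofReal (u i (WithLp.toLp 2 y)) ^ ((m : ℝ) * q) := by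
    intro i
    have h1 := ae_essInf_le (f := fun x => ENNReal.ofReal (u i x ^ ((m : ℝ) * q)))
      (μ := volume.restrict ((WithLp.ofLp : ESp n → (Fin n → ℝ)) ⁻¹' closedBall x r))
    rw [ae_restrict_iff' (measurableSet_closedBall.preimage (WithLp.measurable_ofLp _ _))] at h1
    filter_upwards [aeX h1] with y hy hyB
    refine (hy hyB).trans (le_of_eq ?_)
    rw [ENNReal.ofReal_rpow_of_nonneg ((hu i).2.1 _) (by positivity)]
  have hbt : ∀ i, b i ≠ ⊤ := by
    intro i hi
    apply hv0
    refine measure_mono_null ?_ (ae_iff.1 (hble i))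
    intro y hy hcon
    have := hcon hy
    rw [hi, top_le_iff] at this
    exact (ENNReal.rpow_ne_top_of_nonneg (by positivity) ENNReal.ofReal_ne_top) this
  have hν0 : (volume.withDensity g) (closedBall x r) ≠ 0 := by
    intro h0
    rw [withDensity_apply_eq_zero hgm] at h0
    apply hv0
    have hpos : ∀ᵐ y, g y ≠ 0 := by
      have : ∀ᵐ y : ESp n, ∀ i, 0 < u i y := ae_all_iff.2 fun i => (hu i).2.2.1
      filter_upwards [aeX this] with y hy
      rw [hg]
      simp only [ne_eq, ENNReal.ofReal_eq_zero, not_le]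
      exact Finset.prod_pos fun i _ => Real.rpow_pos_of_pos (hy i) _
    have hnull : volume {y | ¬ g y ≠ 0} = 0 := ae_iff.1 hpos
    refine measure_mono_null (t := {y | g y ≠ 0} ∩ closedBall x r ∪ {y | ¬ g y ≠ 0}) ?_ (measure_union_null h0 hnull)
    intro y hy
    by_cases hgy : g y = 0
    · right; simpa using hgy
    · left; exact ⟨hgy, hy⟩
  have havg : ((volume (closedBall x r))⁻¹ * (volume.withDensity g) (closedBall x r)) ≠ 0 :=
    mul_ne_zero (ENNReal.inv_ne_zero.2 hvt) hν0
  have havgm : ((volume (closedBall x r))⁻¹ * (volume.withDensity g) (closedBall x r)) ^ (m : ℝ) ≠ 0 := by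
    rw [ENNReal.rpow_natCast]; exact pow_ne_zero _ havg
  obtain ⟨h1, h2, h3⟩ := prod_ne_top_of_le havgm hbt hC.ne h
  refine ⟨?_, hν0, fun i => (b i) ^ (1 / ((m : ℝ) * q)), ?_, ?_⟩
  · intro ht
    rw [ht, ENNReal.mul_top (ENNReal.inv_ne_zero.2 hvt), ENNReal.top_rpow_of_pos hm0] at h1
    exact h1 rfl
  · intro i
    filter_upwards [hble i] with y hy hyB
    have := ENNReal.rpow_le_rpow (hy hyB) (z := 1 / ((m : ℝ) * q)) (by positivity)
    rwa [← ENNReal.rpow_mul, mul_one_div_cancel (by positivity), ENNReal.rpow_one] at this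
  · have h4 := ENNReal.rpow_le_rpow h3 (z := 1 / ((m : ℝ) * q)) (by positivity)
    rw [← ENNReal.rpow_mul, ENNReal.mul_rpow_of_nonneg _ _ (z := 1 / ((m : ℝ) * q)) (by positivity),
      ← ENNReal.prod_rpow_of_nonneg (by positivity)] at h4
    have e : (m : ℝ) * (1 / ((m : ℝ) * q)) = 1 / q := by field_simp
    rw [e] at h4
    calc (volume.withDensity g) (closedBall x r) ^ (1 / q)
        = (volume (closedBall x r) * ((volume (closedBall x r))⁻¹ * (volume.withDensity g) (closedBall x r))) ^ (1 / q) := by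
          rw [← mul_assoc, ENNReal.mul_inv_cancel hv0 hvt, one_mul]
      _ = volume (closedBall x r) ^ (1 / q) * ((volume (closedBall x r))⁻¹ * (volume.withDensity g) (closedBall x r)) ^ (1 / q) :=
          ENNReal.mul_rpow_of_nonneg _ _ (by positivity)
      _ ≤ volume (closedBall x r) ^ (1 / q) * (C ^ (1 / ((m : ℝ) * q)) * ∏ i, b i ^ (1 / ((m : ℝ) * q))) := by
          gcongr
      _ = _ := by ring


lemma Ainfb_of {n : ℕ} {f : (Fin n → ℝ) → ℝ≥0∞} {p : ℝ} (hp : 1 ≤ p) {C : ℝ≥0∞} (hC : C ≠ ⊤)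
    (hfin : ∀ x r, (volume.withDensity f) (closedBall x r) < ⊤)
    (h : ∀ (x : Fin n → ℝ) (r : ℝ), 0 < r → ∀ F : Set (Fin n → ℝ), MeasurableSet F → F ⊆ closedBall x r →
      (volume F / volume (closedBall x r)) ^ p * (volume.withDensity f) (closedBall x r) ≤
        C * (volume.withDensity f) F) :
    ∃ (P : ℕ) (K : ℝ), P ≠ 0 ∧ 1 ≤ K ∧ Ainfb f P K := by
  refine ⟨⌈p⌉₊, max 1 C.toReal, ?_, le_max_left _ _, ?_⟩
  · have : 0 < ⌈p⌉₊ := Nat.ceil_pos.2 (by linarith)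
    omega
  intro x r hr F hF hFB
  have hv := vol_cb (n := n) x hr.le
  obtain ⟨hv0, hvt⟩ := volcb_ne x hr
  have hFt : volume F ≠ ⊤ := ((measure_mono hFB).trans_lt hvt.lt_top).ne
  have hwF : (volume.withDensity f) F ≠ ⊤ := ((measure_mono hFB).trans_lt (hfin x r)).ne
  have h1 := ENNReal.toReal_mono (ENNReal.mul_ne_top hC hwF) (h x r hr F hF hFB)
  rw [ENNReal.toReal_mul, ENNReal.toReal_mul, ← ENNReal.toReal_rpow, ENNReal.toReal_div] at h1
  change (volume.real F / volume.real (closedBall x r)) ^ p * (volume.withDensity f).real (closedBall x r) ≤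
    C.toReal * (volume.withDensity f).real F at h1
  have hratio : volume.real F / volume.real (closedBall x r) ≤ 1 := by
    apply div_le_one_of_le₀ (measureReal_mono hFB hvt) measureReal_nonneg
  have hratio0 : 0 ≤ volume.real F / volume.real (closedBall x r) := by positivity
  rw [← hv]
  calc (volume.real F / volume.real (closedBall x r)) ^ ⌈p⌉₊ * (volume.withDensity f).real (closedBall x r)
      ≤ (volume.real F / volume.real (closedBall x r)) ^ p * (volume.withDensity f).real (closedBall x r) := by
        gcongr
        rw [← Real.rpow_natCast]
        rcases hratio0.eq_or_lt with h0 | h0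
        · have hle := Nat.le_ceil p
          rw [← h0, Real.zero_rpow (by intro hh; linarith), Real.zero_rpow (by intro hh; linarith)]
        · exact Real.rpow_le_rpow_of_exponent_ge h0 hratio (Nat.le_ceil p)
    _ ≤ _ := h1
    _ ≤ _ := by
        gcongr
        exact le_max_right _ _

lemma holder_set {n : ℕ} {f : (Fin n → ℝ) → ℝ≥0∞} (hf : Measurable f) (hft : ∀ x, f x ≠ ⊤)
    (hf0 : ∀ᵐ x, f x ≠ 0) {p : ℝ} (hp : 1 < p) (F : Set (Fin n → ℝ)) :
    volume F ^ p ≤ (∫⁻ x in F, f x) * (∫⁻ x in F, f x ^ (1 - p / (p - 1))) ^ (p - 1) := by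
  have hp0 : 0 < p := by linarith
  have hp1 : 0 < p - 1 := by linarith
  have hconj : p.HolderConjugate (p / (p - 1)) := by
    have := Real.HolderConjugate.conjExponent hp
    simpa [Real.conjExponent] using this
  have h1 := ENNReal.lintegral_mul_le_Lp_mul_Lq (volume.restrict F) hconj
    (f := fun x => f x ^ (1 / p)) (g := fun x => f x ^ (-(1 / p))) (hf.pow_const _).aemeasurable
    (hf.pow_const _).aemeasurable
  have h2 : ∫⁻ x in F, ((fun x => f x ^ (1 / p)) * fun x => f x ^ (-(1 / p))) x = volume F := by
    rw [← setLIntegral_one]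
    apply lintegral_congr_ae
    filter_upwards [ae_restrict_of_ae hf0] with x hx
    simp only [Pi.mul_apply]
    rw [← ENNReal.rpow_add _ _ hx (hft x)]
    simp
  rw [h2] at h1
  have h3 := ENNReal.rpow_le_rpow h1 hp0.le
  rw [ENNReal.mul_rpow_of_nonneg _ _ hp0.le, ← ENNReal.rpow_mul, ← ENNReal.rpow_mul,
    one_div_mul_cancel hp0.ne', ENNReal.rpow_one] at h3
  have e1 : 1 / (p / (p - 1)) * p = p - 1 := by field_simp
  rw [e1] at h3
  refine h3.trans (le_of_eq ?_)
  congr 1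
  · apply lintegral_congr
    intro x
    rw [← ENNReal.rpow_mul, one_div_mul_cancel hp0.ne', ENNReal.rpow_one]
  · congr 1
    apply lintegral_congr
    intro x
    rw [← ENNReal.rpow_mul]
    congr 1
    field_simp
    ring

lemma Ainf_X {n : ℕ} (W : ESp n → ℝ) (hW : Measurable W)
    (hWp : ∀ᵐ x, 0 < W x) (h : IsAinfty W) (f : (Fin n → ℝ) → ℝ≥0∞)
    (hfW : ∀ x, f x = ENNReal.ofReal (W (WithLp.toLp 2 x))) :
    (∀ x r, (volume.withDensity f) (closedBall x r) < ⊤) ∧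
      ∃ (P : ℕ) (K : ℝ), P ≠ 0 ∧ 1 ≤ K ∧ Ainfb f P K := by
  have hf : Measurable f := by
    rw [funext hfW]
    exact (hW.comp (WithLp.measurable_toLp _ _)).ennreal_ofReal
  have hft : ∀ x, f x ≠ ⊤ := fun x => by rw [hfW]; exact ENNReal.ofReal_ne_top
  have hf0 : ∀ᵐ x, f x ≠ 0 := by
    filter_upwards [aeX hWp] with x hx
    rw [hfW]; simpa using hx
  have hwM : ∀ x r, wMeas W ((WithLp.ofLp : ESp n → (Fin n → ℝ)) ⁻¹' closedBall x r) =
      (volume.withDensity f) (closedBall x r) := by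
    intro x r
    rw [wMeas, setLI, withDensity_apply _ measurableSet_closedBall]
    simp only [hfW]
  suffices hs : (∀ x r, 0 < r → (volume.withDensity f) (closedBall x r) < ⊤) ∧
      ∃ (p : ℝ) (C : ℝ≥0∞), 1 ≤ p ∧ C ≠ ⊤ ∧
      ∀ (x : Fin n → ℝ) (r : ℝ), 0 < r → ∀ F : Set (Fin n → ℝ), MeasurableSet F → F ⊆ closedBall x r →
      (volume F / volume (closedBall x r)) ^ p * (volume.withDensity f) (closedBall x r) ≤
        C * (volume.withDensity f) F by
    obtain ⟨hfin, p, C, hp, hC, hh⟩ := hs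
    have hfin' : ∀ x r, (volume.withDensity f) (closedBall x r) < ⊤ := fun x r =>
      (measure_mono (closedBall_subset_closedBall (le_max_left r 1))).trans_lt (hfin x (max r 1) (by positivity))
    exact ⟨hfin', Ainfb_of hp hC hfin' hh⟩
  rcases h with ⟨C, hC, hA⟩ | ⟨p, hp, C, hC, hA⟩
  · have key : ∀ x r, 0 < r → ∃ a : ℝ≥0∞, a ≠ ⊤ ∧ (∀ᵐ y, y ∈ closedBall x r → a ≤ f y) ∧
        (volume (closedBall x r))⁻¹ * (volume.withDensity f) (closedBall x r) ≤ C * a := by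
      intro x r hr
      obtain ⟨hv0, hvt⟩ := volcb_ne x hr
      have h := hA _ (cube_ball x hr)
      rw [hwM, volB] at h
      have hble : ∀ᵐ y, y ∈ closedBall x r → essInf (fun x => ENNReal.ofReal (W x))
          (volume.restrict ((WithLp.ofLp : ESp n → (Fin n → ℝ)) ⁻¹' closedBall x r)) ≤ f y := by
        have h1 := ae_essInf_le (f := fun x => ENNReal.ofReal (W x))
          (μ := volume.restrict ((WithLp.ofLp : ESp n → (Fin n → ℝ)) ⁻¹' closedBall x r))
        rw [ae_restrict_iff' (measurableSet_closedBall.preimage (WithLp.measurable_ofLp _ _))] at h1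
        filter_upwards [aeX h1] with y hy hyB
        rw [hfW]
        exact hy hyB
      refine ⟨_, ?_, hble, h⟩
      intro hi
      rw [hi] at hble
      apply hv0
      refine measure_mono_null ?_ (ae_iff.1 hble)
      intro y hy hcon
      exact hft y (top_le_iff.1 (hcon hy))
    refine ⟨?_, 1, C, le_rfl, hC.ne, ?_⟩
    · intro x r hr
      obtain ⟨hv0, hvt⟩ := volcb_ne x hr
      obtain ⟨a, hat, -, h⟩ := key x r hr
      by_contra hcon
      rw [not_lt, top_le_iff] at hcon
      rw [hcon, ENNReal.mul_top (ENNReal.inv_ne_zero.2 hvt), top_le_iff] at h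
      exact ENNReal.mul_ne_top hC.ne hat h
    · intro x r hr F hF hFB
      obtain ⟨a, hat, hae, h⟩ := key x r hr
      rw [ENNReal.rpow_one]
      calc volume F / volume (closedBall x r) * (volume.withDensity f) (closedBall x r)
          = volume F * ((volume (closedBall x r))⁻¹ * (volume.withDensity f) (closedBall x r)) := by
            rw [div_eq_mul_inv, mul_assoc]
        _ ≤ volume F * (C * a) := by gcongr
        _ = C * (a * volume F) := by ring
        _ ≤ C * (volume.withDensity f) F := by
            gcongr
            rw [withDensity_apply _ hF, ← setLIntegral_const]
            apply lintegral_mono_ae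
            rw [ae_restrict_iff' hF]
            filter_upwards [hae] with y hy hyF
            exact hy (hFB hyF)
  · have hp0 : 0 < p := by linarith
    have hp1 : 0 < p - 1 := by linarith
    have key : ∀ x r, 0 < r → ((volume (closedBall x r))⁻¹ * (volume.withDensity f) (closedBall x r)) *
        ((volume (closedBall x r))⁻¹ * ∫⁻ y in closedBall x r, f y ^ (1 - p / (p - 1))) ^ (p - 1) ≤ C := by
      intro x r hr
      have h := hA _ (cube_ball x hr)
      rw [hwM, volB, setLI] at h
      simpa only [← hfW] using h
    have hpos : ∀ x r, 0 < r → ((volume (closedBall x r))⁻¹ * ∫⁻ y in closedBall x r, f y ^ (1 - p / (p - 1))) ^ (p - 1) ≠ 0 := by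
      intro x r hr h0
      obtain ⟨hv0, hvt⟩ := volcb_ne x hr
      rw [ENNReal.rpow_eq_zero_iff_of_pos hp1] at h0
      rcases mul_eq_zero.1 h0 with h0 | h0
      · exact ENNReal.inv_ne_zero.2 hvt h0
      · rw [lintegral_eq_zero_iff (hf.pow_const _)] at h0
        have h1 : ∀ᵐ y ∂(volume.restrict (closedBall x r)), False := by
          filter_upwards [h0] with y hy
          have hneg : 1 - p / (p - 1) < 0 := by
            have : 1 < p / (p - 1) := by rw [lt_div_iff₀ hp1]; linarith
            linarith
          simp only [Pi.zero_apply, ENNReal.rpow_eq_zero_iff] at hy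
          rcases hy with ⟨_, hy⟩ | ⟨hy, _⟩
          · linarith
          · exact hft y hy
        rw [ae_restrict_iff' measurableSet_closedBall] at h1
        apply hv0
        refine measure_mono_null ?_ (ae_iff.1 h1)
        intro y hy hcon
        exact hcon hy
    refine ⟨?_, p, C, hp.le, hC.ne, ?_⟩
    · intro x r hr
      obtain ⟨hv0, hvt⟩ := volcb_ne x hr
      have h := key x r hr
      by_contra hcon
      rw [not_lt, top_le_iff] at hcon
      rw [hcon, ENNReal.mul_top (ENNReal.inv_ne_zero.2 hvt), ENNReal.top_mul (hpos x r hr), top_le_iff] at h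
      exact hC.ne h
    · intro x r hr F hF hFB
      obtain ⟨hv0, hvt⟩ := volcb_ne x hr
      have h := key x r hr
      have hH := holder_set hf hft hf0 hp F
      rw [← withDensity_apply _ hF] at hH
      set V := volume (closedBall x r) with hV
      set wB := (volume.withDensity f) (closedBall x r)
      set S := ∫⁻ y in closedBall x r, f y ^ (1 - p / (p - 1))
      set wF := (volume.withDensity f) F
      have hV1 : V⁻¹ ^ p = V⁻¹ * V⁻¹ ^ (p - 1) := by
        nth_rewrite 2 [← ENNReal.rpow_one V⁻¹]
        rw [← ENNReal.rpow_add _ _ (ENNReal.inv_ne_zero.2 hvt) (ENNReal.inv_ne_top.2 hv0)]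
        congr 1; ring
      have hS : ∫⁻ y in F, f y ^ (1 - p / (p - 1)) ≤ S := lintegral_mono_set hFB
      calc (volume F / V) ^ p * wB = (volume F) ^ p * (V⁻¹ ^ p * wB) := by
            rw [div_eq_mul_inv, ENNReal.mul_rpow_of_nonneg _ _ hp0.le]; ring
        _ ≤ (wF * S ^ (p - 1)) * (V⁻¹ ^ p * wB) := by
            gcongr
            refine hH.trans ?_
            gcongr
        _ = wF * (V⁻¹ * wB * (V⁻¹ * S) ^ (p - 1)) := by
            rw [hV1, ENNReal.mul_rpow_of_nonneg _ _ hp1.le]; ring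
        _ ≤ wF * C := by gcongr
        _ = C * wF := mul_comm _ _


lemma lintegral_pi_prod {E : Type*} [MeasureSpace E] [SigmaFinite (volume : Measure E)] :
    ∀ {m : ℕ} (G : Fin m → E → ℝ≥0∞), (∀ i, Measurable (G i)) →
      ∫⁻ y : Fin m → E, ∏ i, G i (y i) = ∏ i, ∫⁻ y, G i y := by
  intro m
  induction m with
  | zero =>
    intro G hG
    simp [volume_pi]
  | succ m ih =>
    intro G hG
    have h := (volume_preserving_piFinSuccAbove (fun _ : Fin (m + 1) => E) 0).symm
    rw [← h.lintegral_comp_emb (MeasurableEquiv.measurableEmbedding _)]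
    have e : ∀ z : E × (Fin m → E), ∏ i, G i ((MeasurableEquiv.piFinSuccAbove (fun _ : Fin (m + 1) => E) 0).symm z i)
        = G 0 z.1 * ∏ i : Fin m, G i.succ (z.2 i) := by
      intro z
      rw [Fin.prod_univ_succ]
      simp [MeasurableEquiv.piFinSuccAbove]
    simp only [e]
    have hmm : Measurable fun b : Fin m → E => ∏ i : Fin m, G i.succ (b i) :=
      Finset.measurable_prod _ fun i _ => (hG _).comp (measurable_pi_apply i)
    rw [Measure.volume_eq_prod, lintegral_prod_mul (hG 0).aemeasurable hmm.aemeasurable, ih _ fun i => hG _,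
      Fin.prod_univ_succ]

lemma sum_dist_ne {n m : ℕ} (hn : 0 < n) (hm : 0 < m) (x : ESp n) :
    ∀ᵐ y : Fin m → ESp n, 0 < ∑ i, dist x (y i) := by
  have : Nonempty (Fin n) := ⟨⟨0, hn⟩⟩
  have h1 : ∀ᵐ z : ESp n, z ≠ x := by
    rw [ae_iff]; simp
  have h2 := (Measure.quasiMeasurePreserving_eval (μ := fun _ : Fin m => (volume : Measure (ESp n))) ⟨0, hm⟩).ae h1
  filter_upwards [h2] with y hy
  refine Finset.sum_pos' (fun i _ => dist_nonneg) ⟨⟨0, hm⟩, Finset.mem_univ _, ?_⟩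
  exact dist_pos.2 (Ne.symm hy)

lemma nonmeas_zero {n m : ℕ} (hn : 0 < n) {α : ℝ} (hα : α < (m : ℝ) * n) (f : Fin m → ESp n → ℝ) (j : Fin m)
    (hj : ¬ AEMeasurable (f j) volume) (x : ESp n) : multiIα α f x = 0 := by
  by_contra hcon
  have hm : 0 < m := j.pos
  have hint : Integrable (fun y : Fin m → ESp n => (∏ i, f i (y i)) / (∑ i, dist x (y i)) ^ ((m : ℝ) * (n : ℝ) - α)) :=
    not_imp_comm.1 integral_undef hcon
  have hR := sum_dist_ne hn hm x
  have hRm : Measurable fun y : Fin m → ESp n => (∑ i, dist x (y i)) ^ ((m : ℝ) * (n : ℝ) - α) := by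
    apply Measurable.pow_const
    apply Finset.measurable_sum
    intro i _
    exact measurable_const.dist (measurable_pi_apply i)
  have hP : AEMeasurable (fun y : Fin m → ESp n => ∏ i, f i (y i)) volume := by
    refine AEMeasurable.congr (hint.aemeasurable.mul hRm.aemeasurable) ?_
    filter_upwards [hR] with y hy
    have : (∑ i, dist x (y i)) ^ ((m : ℝ) * (n : ℝ) - α) ≠ 0 := (Real.rpow_pos_of_pos hy _).ne'
    simp only [Pi.mul_apply]
    field_simp
  have hzero : ∀ᵐ y : Fin m → ESp n, ∏ i, f i (y i) = 0 := by
    obtain ⟨m, rfl⟩ : ∃ k, m = k + 1 := ⟨m - 1, by omega⟩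
    have h := (volume_preserving_piFinSuccAbove (fun _ : Fin (m + 1) => ESp n) j)
    have e : ∀ z : ESp n × (Fin m → ESp n), ∏ i, f i ((MeasurableEquiv.piFinSuccAbove (fun _ : Fin (m + 1) => ESp n) j).symm z i)
        = f j z.1 * ∏ i : Fin m, f (j.succAbove i) (z.2 i) := by
      intro z
      have hz : (MeasurableEquiv.piFinSuccAbove (fun _ : Fin (m + 1) => ESp n) j).symm z =
          Fin.insertNth (α := fun _ => ESp n) j z.1 z.2 := rfl
      rw [Fin.prod_univ_succAbove _ j, hz]
      simp only [Fin.insertNth_apply_same, Fin.insertNth_apply_succAbove]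
    have h1 := hP.comp_quasiMeasurePreserving h.symm.quasiMeasurePreserving
    have h2 : AEMeasurable (fun z : ESp n × (Fin m → ESp n) => f j z.1 * ∏ i : Fin m, f (j.succAbove i) (z.2 i))
        ((volume : Measure (ESp n)).prod (volume : Measure (Fin m → ESp n))) := by
      refine h1.congr (Eventually.of_forall fun z => ?_)
      exact e z
    have h3 : AEStronglyMeasurable (fun z : (Fin m → ESp n) × ESp n => f j z.2 * ∏ i : Fin m, f (j.succAbove i) (z.1 i))
        ((volume : Measure (Fin m → ESp n)).prod (volume : Measure (ESp n))) := by
      have := h2.aestronglyMeasurable.prod_swap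
      exact this
    have h4 := h3.prodMk_left
    have h5 : ∀ᵐ b : Fin m → ESp n, ∏ i : Fin m, f (j.succAbove i) (b i) = 0 := by
      filter_upwards [h4] with b hb
      by_contra hne
      apply hj
      have h6 := hb.aemeasurable.mul_const (∏ i : Fin m, f (j.succAbove i) (b i))⁻¹
      refine h6.congr (Eventually.of_forall fun a => ?_)
      simp only
      rw [mul_assoc, mul_inv_cancel₀ hne, mul_one]
    have h7 : ∀ᵐ z : ESp n × (Fin m → ESp n), ∏ i : Fin m, f (j.succAbove i) (z.2 i) = 0 :=
      Measure.quasiMeasurePreserving_snd.ae h5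
    filter_upwards [h.quasiMeasurePreserving.ae h7] with y hy
    have := e (MeasurableEquiv.piFinSuccAbove (fun _ : Fin (m + 1) => ESp n) j y)
    rw [MeasurableEquiv.symm_apply_apply, hy, mul_zero] at this
    exact this
  apply hcon
  rw [multiIα]
  apply integral_eq_zero_of_ae
  filter_upwards [hzero] with y hy
  simp [hy]


lemma aeE {n : ℕ} {P : (Fin n → ℝ) → Prop} (h : ∀ᵐ y, P y) : ∀ᵐ x : ESp n, P (WithLp.ofLp x) :=
  (PiLp.volume_preserving_ofLp (Fin n)).quasiMeasurePreserving.ae h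

lemma dist_ofLp_le {n : ℕ} (x y : ESp n) : dist (WithLp.ofLp x) (WithLp.ofLp y) ≤ dist x y := by
  rw [dist_pi_le_iff dist_nonneg]
  intro i
  rw [dist_eq_norm, dist_eq_norm]
  have := PiLp.norm_apply_le (x - y) i
  simpa using this

lemma ptwise {n m : ℕ} (hm : 0 < m) {q p γ : ℝ} (hq : 0 < q) (hpq : p = m * q)
    (hγ : γ = n / q) (hγ0 : 0 < γ) (u : Fin m → ESp n → ℝ)
    (g : (Fin n → ℝ) → ℝ≥0∞) {C : ℝ≥0∞} (x : ESp n)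
    (hA : ∀ r : ℝ, 0 < r →
      (volume.withDensity g) (closedBall (WithLp.ofLp x) r) ≠ ⊤ ∧
      (volume.withDensity g) (closedBall (WithLp.ofLp x) r) ≠ 0 ∧
      ∃ a : Fin m → ℝ≥0∞, (∀ i, ∀ᵐ y, y ∈ closedBall (WithLp.ofLp x) r → a i ≤ ENNReal.ofReal (u i (WithLp.toLp 2 y))) ∧
        (volume.withDensity g) (closedBall (WithLp.ofLp x) r) ^ (1 / q) ≤
          C * volume (closedBall (WithLp.ofLp x) r) ^ (1 / q) * ∏ i, a i) :
    ∀ᵐ y : Fin m → ESp n, 0 < ∑ i, dist x (y i) →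
      (ENNReal.ofReal ((∑ i, dist x (y i)) ^ γ))⁻¹ ≤ C * ENNReal.ofReal (8 ^ γ) *
        ∏ i, (ENNReal.ofReal (u i (y i)) *
          (volume.withDensity g) (closedBall (WithLp.ofLp (y i)) (dist (WithLp.ofLp x) (WithLp.ofLp (y i)))) ^ (-1 / p)) := by
  set ν := volume.withDensity g
  have hm0 : (0 : ℝ) < m := by exact_mod_cast hm
  have hp0 : 0 < p := by rw [hpq]; positivity
  have hz : ∀ k : ℤ, (0 : ℝ) < 2 ^ k := fun k => by positivity
  have h1 : ∀ k : ℤ, ν (closedBall (WithLp.ofLp x) (2 ^ k)) ≠ ⊤ := fun k => (hA _ (hz k)).1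
  have h2 : ∀ k : ℤ, ν (closedBall (WithLp.ofLp x) (2 ^ k)) ≠ 0 := fun k => (hA _ (hz k)).2.1
  have h3 := fun k : ℤ => (hA _ (hz k)).2.2
  choose a ha hb using h3
  have hae : ∀ᵐ y : Fin m → ESp n, ∀ (k : ℤ) (i : Fin m), WithLp.ofLp (y i) ∈ closedBall (WithLp.ofLp x) (2 ^ k) →
      a k i ≤ ENNReal.ofReal (u i (y i)) := by
    rw [ae_all_iff]; intro k
    rw [ae_all_iff]; intro i
    have := aeE (ha k i)
    exact (Measure.quasiMeasurePreserving_eval (μ := fun _ : Fin m => (volume : Measure (ESp n))) i).ae this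
  filter_upwards [hae] with y hy hR
  set R := ∑ i, dist x (y i) with hRdef
  obtain ⟨k0, hk1, hk2⟩ := exists_mem_Ioc_zpow hR (one_lt_two (α := ℝ))
  have hk3 : (2 : ℝ) ^ (k0 + 2) = 4 * 2 ^ k0 := by
    rw [zpow_add₀ (by norm_num)]; norm_num; ring
  have hk4 : (2 : ℝ) ^ (k0 + 1) = 2 * 2 ^ k0 := by
    rw [zpow_add₀ (by norm_num)]; norm_num; ring
  set k := k0 + 2 with hk
  set r : ℝ := 2 ^ k with hr
  have hr1 : 2 * R ≤ r := by linarith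
  have hr2 : r ≤ 4 * R := by linarith
  have hr0 : 0 < r := hz k
  set N := ν (closedBall (WithLp.ofLp x) r) with hN
  have hN0 : N ≠ 0 := h2 k
  have hNt : N ≠ ⊤ := h1 k
  have hd : ∀ i, dist (WithLp.ofLp x) (WithLp.ofLp (y i)) ≤ R := fun i =>
    (dist_ofLp_le x (y i)).trans (Finset.single_le_sum (f := fun i => dist x (y i)) (fun i _ => dist_nonneg) (Finset.mem_univ i))
  have hmem : ∀ i, WithLp.ofLp (y i) ∈ closedBall (WithLp.ofLp x) r := fun i => by
    rw [mem_closedBall, dist_comm]; linarith [hd i]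
  have hsub : ∀ i, closedBall (WithLp.ofLp (y i)) (dist (WithLp.ofLp x) (WithLp.ofLp (y i))) ⊆
      closedBall (WithLp.ofLp x) r := fun i => by
    apply closedBall_subset_closedBall'
    rw [dist_comm (WithLp.ofLp (y i))]
    linarith [hd i]
  have hV : volume (closedBall (WithLp.ofLp x) r) ^ (1 / q) ≤ ENNReal.ofReal (8 ^ γ) * ENNReal.ofReal (R ^ γ) := by
    rw [Real.volume_pi_closedBall _ hr0.le, Fintype.card_fin, ENNReal.ofReal_rpow_of_pos (by positivity),
      ← ENNReal.ofReal_mul (by positivity), ← Real.mul_rpow (by norm_num) hR.le]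
    apply ENNReal.ofReal_le_ofReal
    rw [← Real.rpow_natCast, ← Real.rpow_mul (by positivity)]
    have e : (n : ℝ) * (1 / q) = γ := by rw [hγ]; ring
    rw [e]
    apply Real.rpow_le_rpow (by positivity) (by linarith) hγ0.le
  set U := ∏ i, ENNReal.ofReal (u i (y i)) with hU
  set ρ := ENNReal.ofReal (R ^ γ) with hρ
  have hρ0 : ρ ≠ 0 := by
    simp only [hρ, ne_eq, ENNReal.ofReal_eq_zero, not_le]; positivity
  have hmain : N ^ (1 / q) ≤ C * (ENNReal.ofReal (8 ^ γ) * ρ) * U := by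
    refine (hb k).trans ?_
    have hUle : ∏ i, a k i ≤ U := Finset.prod_le_prod' fun i _ => hy k i (hmem i)
    gcongr
  have hNq0 : N ^ (1 / q) ≠ 0 := by
    rw [ne_eq, ENNReal.rpow_eq_zero_iff_of_pos (by positivity)]; exact hN0
  have hNqt : N ^ (1 / q) ≠ ⊤ := ENNReal.rpow_ne_top_of_nonneg (by positivity) hNt
  have hNprod : (N ^ (1 / q))⁻¹ ≤ ∏ i, ν (closedBall (WithLp.ofLp (y i)) (dist (WithLp.ofLp x) (WithLp.ofLp (y i)))) ^ (-1 / p) := by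
    have e : (N ^ (1 / q))⁻¹ = ∏ _i : Fin m, N ^ (-1 / p) := by
      rw [Finset.prod_const, Finset.card_univ, Fintype.card_fin, ← ENNReal.rpow_natCast, ← ENNReal.rpow_mul,
        ← ENNReal.rpow_neg]
      congr 1
      rw [hpq]; field_simp
    rw [e]
    apply Finset.prod_le_prod'
    intro i _
    rw [neg_div, ENNReal.rpow_neg, ENNReal.rpow_neg, ENNReal.inv_le_inv]
    exact ENNReal.rpow_le_rpow (measure_mono (hsub i)) (by positivity)
  calc ρ⁻¹ = ρ⁻¹ * (N ^ (1 / q) * (N ^ (1 / q))⁻¹) := by rw [ENNReal.mul_inv_cancel hNq0 hNqt, mul_one]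
    _ ≤ ρ⁻¹ * (C * (ENNReal.ofReal (8 ^ γ) * ρ) * U * (N ^ (1 / q))⁻¹) := by gcongr
    _ = (ρ⁻¹ * ρ) * (C * ENNReal.ofReal (8 ^ γ) * (U * (N ^ (1 / q))⁻¹)) := by ring
    _ = C * ENNReal.ofReal (8 ^ γ) * (U * (N ^ (1 / q))⁻¹) := by
        rw [ENNReal.inv_mul_cancel hρ0 ENNReal.ofReal_ne_top, one_mul]
    _ ≤ _ := by
        rw [Finset.prod_mul_distrib]
        gcongr

lemma multiI_bound {n m : ℕ} (hm : 0 < m) {α q p : ℝ} (hq : 0 < q) (hpq : p = m * q)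
    (hγ : (m : ℝ) * n - α = n / q) (hγ0 : 0 < (m : ℝ) * n - α) (u : Fin m → ESp n → ℝ)
    (hum : ∀ i, Measurable (u i))
    (g : (Fin n → ℝ) → ℝ≥0∞) (hg : Measurable g) {C : ℝ≥0∞} (x : ESp n)
    (hA : ∀ r : ℝ, 0 < r →
      (volume.withDensity g) (closedBall (WithLp.ofLp x) r) ≠ ⊤ ∧
      (volume.withDensity g) (closedBall (WithLp.ofLp x) r) ≠ 0 ∧
      ∃ a : Fin m → ℝ≥0∞, (∀ i, ∀ᵐ y, y ∈ closedBall (WithLp.ofLp x) r → a i ≤ ENNReal.ofReal (u i (WithLp.toLp 2 y))) ∧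
        (volume.withDensity g) (closedBall (WithLp.ofLp x) r) ^ (1 / q) ≤
          C * volume (closedBall (WithLp.ofLp x) r) ^ (1 / q) * ∏ i, a i)
    (f : Fin m → ESp n → ℝ) (hf : ∀ i, Measurable (f i)) :
    ENNReal.ofReal |multiIα α f x| ≤ C * ENNReal.ofReal (8 ^ ((m : ℝ) * n - α)) *
      ∏ i, ∫⁻ y : Fin n → ℝ, ENNReal.ofReal (|f i (WithLp.toLp 2 y)| * u i (WithLp.toLp 2 y)) *
        (volume.withDensity g) (closedBall y (dist (WithLp.ofLp x) y)) ^ (-1 / p) := by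
  have hpt := ptwise hm hq hpq hγ hγ0 u g x hA
  set ν := volume.withDensity g with hν
  have hKm : Measurable fun y : Fin n → ℝ => ν (closedBall y (dist (WithLp.ofLp x) y)) ^ (-1 / p) := by
    have := ((kern_meas hg).comp (measurable_prodMk_left (x := (WithLp.ofLp x : Fin n → ℝ)))).pow_const (-1 / p)
    exact this
  let G : Fin m → ESp n → ℝ≥0∞ := fun i y => ENNReal.ofReal (|f i y| * u i y) *
        ν (closedBall (WithLp.ofLp y) (dist (WithLp.ofLp x) (WithLp.ofLp y))) ^ (-1 / p)
  have hG : ∀ i, Measurable (G i) := fun i => by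
    apply Measurable.mul
    · exact ((hf i).abs.mul (hum i)).ennreal_ofReal
    · exact hKm.comp (WithLp.measurable_ofLp _ _)
  have hGm : Measurable fun y : Fin m → ESp n => ∏ i, G i (y i) :=
    Finset.measurable_prod _ fun i _ => (hG i).comp (measurable_pi_apply i)
  calc ENNReal.ofReal |multiIα α f x| = ‖multiIα α f x‖ₑ := by
        rw [← Real.norm_eq_abs, ofReal_norm]
    _ ≤ ∫⁻ y : Fin m → ESp n, ‖(∏ i, f i (y i)) / (∑ i, dist x (y i)) ^ ((m : ℝ) * (n : ℝ) - α)‖ₑ :=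
        enorm_integral_le_lintegral_enorm _
    _ ≤ ∫⁻ y : Fin m → ESp n, C * ENNReal.ofReal (8 ^ ((m : ℝ) * n - α)) * ∏ i, G i (y i) := by
        apply lintegral_mono_ae
        filter_upwards [hpt] with y hy
        have hR0 : 0 ≤ ∑ i, dist x (y i) := Finset.sum_nonneg fun i _ => dist_nonneg
        rcases hR0.eq_or_lt with h0 | h0
        · rw [← h0, Real.zero_rpow hγ0.ne']; simp
        · have hpos := Real.rpow_pos_of_pos h0 ((m : ℝ) * n - α)
          rw [← ofReal_norm, Real.norm_eq_abs, abs_div, Finset.abs_prod, abs_of_pos hpos,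
            ENNReal.ofReal_div_of_pos hpos, ENNReal.ofReal_prod_of_nonneg (fun i _ => abs_nonneg _), div_eq_mul_inv]
          calc _ ≤ (∏ i, ENNReal.ofReal |f i (y i)|) * _ := mul_le_mul_right (hy h0) _
            _ = _ := by
              rw [mul_left_comm, ← Finset.prod_mul_distrib]
              congr 1
              apply Finset.prod_congr rfl
              intro i _
              simp only [G]
              rw [ENNReal.ofReal_mul (abs_nonneg _), mul_assoc]
    _ = C * ENNReal.ofReal (8 ^ ((m : ℝ) * n - α)) * ∏ i, ∫⁻ y, G i y := by
        rw [lintegral_const_mul _ hGm, lintegral_pi_prod G hG]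
    _ = _ := by
        congr 1
        apply Finset.prod_congr rfl
        intro i _
        rw [LI]


lemma A1b_of {n m : ℕ} {q : ℝ} (hq : 0 < q) (u : Fin m → ESp n → ℝ) (hu0 : ∀ i x, 0 ≤ u i x)
    (g : (Fin n → ℝ) → ℝ≥0∞) (hg : ∀ x, g x = ENNReal.ofReal (∏ i, u i (WithLp.toLp 2 x) ^ q))
    {C : ℝ≥0∞} (hC : C ≠ ⊤)
    (hA : ∀ (x : Fin n → ℝ) (r : ℝ), 0 < r →
      (volume.withDensity g) (closedBall x r) ≠ ⊤ ∧ (volume.withDensity g) (closedBall x r) ≠ 0 ∧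
      ∃ a : Fin m → ℝ≥0∞, (∀ i, ∀ᵐ y, y ∈ closedBall x r → a i ≤ ENNReal.ofReal (u i (WithLp.toLp 2 y))) ∧
        (volume.withDensity g) (closedBall x r) ^ (1 / q) ≤
          C * volume (closedBall x r) ^ (1 / q) * ∏ i, a i) :
    A1b g (max 1 (C ^ q).toReal) := by
  intro x r hr
  obtain ⟨-, -, a, ha, h⟩ := hA x r hr
  filter_upwards [ae_all_iff.2 ha] with z hz hzB
  have h1 : (volume.withDensity g) (closedBall x r) ^ (1 / q) ≤
      C * volume (closedBall x r) ^ (1 / q) * ∏ i, ENNReal.ofReal (u i (WithLp.toLp 2 z)) := by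
    refine h.trans ?_
    gcongr with i
    exact hz i hzB
  have h2 := ENNReal.rpow_le_rpow h1 hq.le
  rw [← ENNReal.rpow_mul, one_div_mul_cancel hq.ne', ENNReal.rpow_one, ENNReal.mul_rpow_of_nonneg _ _ hq.le,
    ENNReal.mul_rpow_of_nonneg _ _ hq.le, ← ENNReal.rpow_mul, one_div_mul_cancel hq.ne', ENNReal.rpow_one] at h2
  have h3 : (∏ i, ENNReal.ofReal (u i (WithLp.toLp 2 z))) ^ q = g z := by
    rw [hg, ← ENNReal.prod_rpow_of_nonneg hq.le, ENNReal.ofReal_prod_of_nonneg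
      (fun i _ => Real.rpow_nonneg (hu0 _ _) _)]
    apply Finset.prod_congr rfl
    intro i _
    rw [ENNReal.ofReal_rpow_of_nonneg (hu0 _ _) hq.le]
  rw [h3] at h2
  refine h2.trans ?_
  gcongr
  refine (ENNReal.ofReal_toReal (ENNReal.rpow_ne_top_of_nonneg hq.le hC)).symm.le.trans ?_
  exact ENNReal.ofReal_le_ofReal (le_max_right _ _)

lemma main_aux {n m : ℕ} (hn : 0 < n) (hm : 0 < m)
    (α q : ℝ) (hα0 : 0 < α) (hα : α < (m : ℝ) * (n : ℝ))
    (hq : q = (n : ℝ) / ((m : ℝ) * (n : ℝ) - α))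
    (u : Fin m → ESp n → ℝ) (v : ESp n → ℝ)
    (hu : ∀ i, IsWeight (u i)) (hv : IsWeight v)
    (hA : A11 (fun i x => u i x ^ ((m : ℝ) * q)))
    (hAinf : IsAinfty (fun x => (∏ i, u i x ^ q) * v x ^ q)) :
    ∃ C : ℝ≥0∞, C < ⊤ ∧
      ∀ f : Fin m → ESp n → ℝ,
        wnorm (fun x => ENNReal.ofReal |multiIα α f x| / ENNReal.ofReal (v x)) q
            (fun x => (∏ i, u i x ^ q) * v x ^ q)
          ≤ C * ∏ i, L1norm (f i) (u i) := by
  have hn0 : (0 : ℝ) < n := by exact_mod_cast hn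
  have hm0 : (0 : ℝ) < m := by exact_mod_cast hm
  have hγ0 : 0 < (m : ℝ) * n - α := by linarith
  have hq0 : 0 < q := by rw [hq]; positivity
  have hγ : (m : ℝ) * n - α = n / q := by rw [hq]; field_simp
  set p : ℝ := m * q with hpq
  have hp : 1 < p := by
    rw [hpq, hq, ← mul_div_assoc, lt_div_iff₀ hγ0]; linarith
  let g : (Fin n → ℝ) → ℝ≥0∞ := fun x => ENNReal.ofReal (∏ i, u i (WithLp.toLp 2 x) ^ q)
  let vv : (Fin n → ℝ) → ℝ≥0∞ := fun x => ENNReal.ofReal (v (WithLp.toLp 2 x))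
  let W : ESp n → ℝ := fun x => (∏ i, u i x ^ q) * v x ^ q
  let ff : (Fin n → ℝ) → ℝ≥0∞ := fun x => ENNReal.ofReal (W (WithLp.toLp 2 x))
  have hum : ∀ i, Measurable (u i) := fun i => (hu i).1
  have hu0 : ∀ i x, 0 ≤ u i x := fun i => (hu i).2.1
  have hνm : Measurable fun x : ESp n => ∏ i, u i x ^ q :=
    Finset.measurable_prod _ fun i _ => (hum i).pow_const _
  have hWm : Measurable W := hνm.mul (hv.1.pow_const _)
  have hgm : Measurable g := (hνm.comp (WithLp.measurable_toLp _ _)).ennreal_ofReal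
  have hvvm : Measurable vv := (hv.1.comp (WithLp.measurable_toLp _ _)).ennreal_ofReal
  have hffm : Measurable ff := (hWm.comp (WithLp.measurable_toLp _ _)).ennreal_ofReal
  have hWp : ∀ᵐ x, 0 < W x := by
    have h1 : ∀ᵐ y : ESp n, ∀ i, 0 < u i y := ae_all_iff.2 fun i => (hu i).2.2.1
    filter_upwards [h1, hv.2.2.1] with x h1 h2
    exact mul_pos (Finset.prod_pos fun i _ => Real.rpow_pos_of_pos (h1 i) _) (Real.rpow_pos_of_pos h2 _)
  obtain ⟨C0, hC0, hAX⟩ := A11_X hm hq0 u hu hA g (fun _ => rfl)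
  obtain ⟨hwfin, P, Cw, hP, hCw, hAi⟩ := Ainf_X W hWm hWp hAinf ff (fun _ => rfl)
  have hA1 := A1b_of hq0 u hu0 g (fun _ => rfl) hC0 hAX
  have hνfin : ∀ x r, (volume.withDensity g) (closedBall x r) < ⊤ := fun x r =>
    (measure_mono (closedBall_subset_closedBall (le_max_left r 1))).trans_lt
      (hAX x (max r 1) (by positivity)).1.lt_top
  have hνpos : ∀ x r, 0 < r → 0 < (volume.withDensity g) (closedBall x r) := fun x r hr =>
    pos_iff_ne_zero.2 (hAX x r hr).2.1
  have hfg : ff =ᵐ[volume] fun x => g x * vv x ^ q := by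
    refine Eventually.of_forall fun x => ?_
    simp only [ff, W, g, vv]
    rw [ENNReal.ofReal_rpow_of_nonneg (hv.2.1 _) hq0.le, ENNReal.ofReal_mul
      (Finset.prod_nonneg fun i _ => Real.rpow_nonneg (hu0 _ _) _)]
  obtain ⟨D, hD, hker⟩ := kernel_est hn hP (le_max_left _ _) hCw hgm (hvvm.pow_const q) hffm hfg hA1 hAi
    hνfin hwfin hνpos
  set c : ℝ≥0∞ := C0 * ENNReal.ofReal (8 ^ ((m : ℝ) * n - α)) with hc
  have hct : c ≠ ⊤ := ENNReal.mul_ne_top hC0 ENNReal.ofReal_ne_top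
  have hvv0 : ∀ᵐ x, vv x ≠ 0 := by
    filter_upwards [aeX hv.2.2.1] with x hx
    simpa [vv] using hx
  refine ⟨c * ENNReal.ofReal (1 + 2 * D * (1 - 2 ^ (1 - p))⁻¹) ^ m, ?_, ?_⟩
  · exact (ENNReal.mul_ne_top hct (ENNReal.pow_ne_top ENNReal.ofReal_ne_top)).lt_top
  -- the measurable case
  have hmeas : ∀ f : Fin m → ESp n → ℝ, (∀ i, Measurable (f i)) →
        wnorm (fun x => ENNReal.ofReal |multiIα α f x| / ENNReal.ofReal (v x)) q W
          ≤ c * ENNReal.ofReal (1 + 2 * D * (1 - 2 ^ (1 - p))⁻¹) ^ m * ∏ i, L1norm (f i) (u i) := by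
    intro f hf
    rw [wnorm]
    refine iSup₂_le fun t ht => ?_
    let F : Fin m → (Fin n → ℝ) → ℝ≥0∞ := fun i y =>
      ENNReal.ofReal (|f i (WithLp.toLp 2 y)| * u i (WithLp.toLp 2 y))
    have hF : ∀ i, Measurable (F i) := fun i =>
      (((hf i).abs.mul (hum i)).comp (WithLp.measurable_toLp _ _)).ennreal_ofReal
    have hweak := weak_X hm hp hpq hD hgm hvvm hvv0 (fun x => ENNReal.ofReal_ne_top) hwfin hker F hF c t ht
    have hL : ∀ i, L1norm (f i) (u i) = ∫⁻ y, F i y := fun i => by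
      rw [L1norm, LI]
    simp only [hL]
    refine le_trans ?_ hweak
    gcongr
    refine le_trans ?_ (withDensity_apply_le _ _)
    rw [wMeas]
    refine le_trans ?_ (setLI (fun x => ENNReal.ofReal (W x)) _).le
    apply lintegral_mono_set
    intro x hx
    have h1 := ENNReal.mul_le_of_le_div (le_of_lt (show ENNReal.ofReal t < _ / _ from hx))
    have h2 := multiI_bound hm hq0 hpq hγ hγ0 u hum g hgm x (fun r hr => hAX _ r hr) f hf
    exact h1.trans h2
  intro f
  by_cases hf : ∀ i, AEMeasurable (f i) volume
  · have h1 := hmeas (fun i => (hf i).mk) (fun i => (hf i).measurable_mk)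
    have e1 : ∀ x, multiIα α f x = multiIα α (fun i => (hf i).mk) x := by
      intro x
      apply integral_congr_ae
      have : ∀ᵐ y : Fin m → ESp n, ∀ i, f i (y i) = (hf i).mk (f i) (y i) := by
        rw [ae_all_iff]; intro i
        exact (Measure.quasiMeasurePreserving_eval (μ := fun _ : Fin m => (volume : Measure (ESp n))) i).ae (hf i).ae_eq_mk
      filter_upwards [this] with y hy
      simp only [hy]
    have e2 : ∀ i, L1norm (f i) (u i) = L1norm ((hf i).mk) (u i) := by
      intro i
      apply lintegral_congr_ae
      filter_upwards [(hf i).ae_eq_mk] with y hy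
      rw [hy]
    simp only [e1, e2]
    exact h1
  · push Not at hf
    obtain ⟨j, hj⟩ := hf
    have e1 : ∀ x, multiIα α f x = 0 := nonmeas_zero hn hα f j hj
    have : wnorm (fun x => ENNReal.ofReal |multiIα α f x| / ENNReal.ofReal (v x)) q W = 0 := by
      rw [wnorm]
      simp only [e1, abs_zero, ENNReal.ofReal_zero, ENNReal.zero_div, _root_.not_lt_zero, Set.ofPred_false]
      simp [wMeas, hq0]
    change wnorm _ q W ≤ _
    rw [this]
    simp


end Helpers

/-- **Main theorem on `𝓘_α`, first weight condition.**  Let `0 < α < mn`,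
`q = n/(mn-α)`, `ν = ∏ uᵢ^q`.  If `u⃗^{mq} ∈ A_{(1,…,1)}` and `ν v^q ∈ A_∞`, then there
is `C` such that `‖𝓘_α(f⃗)/v‖_{L^{q,∞}(ν v^q)} ≤ C ∏ ‖fᵢ‖_{L¹(uᵢ)}`. -/
theorem multilinear_fracIntegral_mixed_first {n m : ℕ} (hn : 0 < n) (hm : 0 < m)
    (α q : ℝ) (hα0 : 0 < α) (hα : α < (m : ℝ) * (n : ℝ))
    (hq : q = (n : ℝ) / ((m : ℝ) * (n : ℝ) - α))
    (u : Fin m → ESp n → ℝ) (v : ESp n → ℝ)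
    (hu : ∀ i, IsWeight (u i)) (hv : IsWeight v)
    (hA : A11 (fun i x => u i x ^ ((m : ℝ) * q)))
    (hAinf : IsAinfty (fun x => (∏ i, u i x ^ q) * v x ^ q)) :
    ∃ C : ℝ≥0∞, C < ⊤ ∧
      ∀ f : Fin m → ESp n → ℝ,
        wnorm (fun x => ENNReal.ofReal |multiIα α f x| / ENNReal.ofReal (v x)) q
            (fun x => (∏ i, u i x ^ q) * v x ^ q)
          ≤ C * ∏ i, L1norm (f i) (u i) := by
  exact main_aux hn hm α q hα0 hα hq u v hu hv hA hAinf

end
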